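/- arXiv:math/0608252 — 2 statements merged into one kernel-verified Lean document; each statement's English description precedes it below -/
import Mathlib

section
/- Let P and Q be irreducible aperiodic stochastic matrices on finite state sets. If the mixing Markov shifts determined by P and Q are finitarily isomorphic with finite expected code times, then β_P(t) = β_Q(t) for every t ∈ ℝ. -/
open MeasureTheory ENNReal Filter

noncomputable section

/-- The left shift transformation on bi-infinite sequences: `(shift x) n = x (n+1)`. -/
def shift {A : Type*} : (ℤ → A) → (ℤ → A) := fun x n => x (n + 1)

/-- `φ` is a homomorphism (factor map) from the shift system `(ℤ → A, μ, shift)` to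
`(ℤ → B, ν, shift)`, defined on the shift-invariant full-measure domain `D`. -/
structure IsFactorMap {A B : Type*} [MeasurableSpace A] [MeasurableSpace B]
    (μ : Measure (ℤ → A)) (ν : Measure (ℤ → B))
    (D : Set (ℤ → A)) (φ : (ℤ → A) → (ℤ → B)) : Prop where
  measurable_map : Measurable φ
  dom_measurable : MeasurableSet D
  dom_shift_invariant : shift ⁻¹' D = D
  dom_full : μ D = 1
  pushforward : ν = μ.map φ
  equivariant : ∀ x ∈ D, φ (shift x) = shift (φ x)

/-- The window `[-q, r]` of `x` determines the zero coordinate of the image under `φ`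
(among points of the domain `D`). -/
def DeterminesAt {A B : Type*} (D : Set (ℤ → A)) (φ : (ℤ → A) → (ℤ → B))
    (q r : ℕ) (x : ℤ → A) : Prop :=
  ∀ y ∈ D, (∀ i : ℤ, -(q : ℤ) ≤ i → i ≤ (r : ℤ) → y i = x i) → φ y 0 = φ x 0

/-- A homomorphism `φ` with domain `D` is finitary if for almost every `x` in the domain
there are nonnegative integers `q`, `r` such that the coordinates `x_{-q}, …, x_r`
determine `(φ x)_0`. -/
def IsFinitary {A B : Type*} [MeasurableSpace A] [MeasurableSpace B]
    (μ : Measure (ℤ → A)) (D : Set (ℤ → A)) (φ : (ℤ → A) → (ℤ → B)) : Prop :=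
  ∀ᵐ x ∂μ, x ∈ D → ∃ q r : ℕ, DeterminesAt D φ q r x

/-- The code length `C(x) = q(x) + r(x)` with `q(x), r(x)` minimal such that the window
`[-q(x), r(x)]` determines the zero output coordinate (`⊤` if no finite window works). -/
def codeLength {A B : Type*} (D : Set (ℤ → A)) (φ : (ℤ → A) → (ℤ → B))
    (x : ℤ → A) : ℝ≥0∞ :=
  ⨅ (q : ℕ) (r : ℕ) (_ : DeterminesAt D φ q r x), ((q : ℝ≥0∞) + (r : ℝ≥0∞))

/-- `μ` is the Bernoulli (product) measure on `(ℤ → A)` given by the probability vector `p`. -/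
def IsBernoulliMeasure {A : Type*} [MeasurableSpace A] (μ : Measure (ℤ → A)) (p : A → ℝ) : Prop :=
  ∀ (F : Finset ℤ) (s : ℤ → A),
    μ {x | ∀ i ∈ F, x i = s i} = ENNReal.ofReal (∏ i ∈ F, p (s i))

/-- A strictly positive probability vector on a finite alphabet. -/
def IsProbVector {A : Type*} [Fintype A] (p : A → ℝ) : Prop :=
  (∀ i, 0 < p i) ∧ ∑ i, p i = 1

/-- The entropy `H(p) = -∑ p_i log p_i` of a probability vector. -/
def vecEntropy {A : Type*} [Fintype A] (p : A → ℝ) : ℝ := -∑ i, p i * Real.log (p i)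

/-- A finitary isomorphism: a pair of mutually inverse finitary factor maps. -/
def IsFinitaryIsomorphism {A B : Type*} [MeasurableSpace A] [MeasurableSpace B]
    (μ : Measure (ℤ → A)) (ν : Measure (ℤ → B))
    (D : Set (ℤ → A)) (E : Set (ℤ → B))
    (φ : (ℤ → A) → (ℤ → B)) (ψ : (ℤ → B) → (ℤ → A)) : Prop :=
  IsFactorMap μ ν D φ ∧ IsFactorMap ν μ E ψ ∧
  IsFinitary μ D φ ∧ IsFinitary ν E ψ ∧
  (∀ x ∈ D, φ x ∈ E ∧ ψ (φ x) = x) ∧ (∀ y ∈ E, ψ y ∈ D ∧ φ (ψ y) = y)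

/-- A stochastic matrix: nonnegative entries, rows summing to one. -/
def IsStochastic {S : Type*} [Fintype S] (P : Matrix S S ℝ) : Prop :=
  (∀ i j, 0 ≤ P i j) ∧ ∀ i, ∑ j, P i j = 1

/-- Irreducible and aperiodic (primitive): some power has all entries strictly positive. -/
def IsPrimitive {S : Type*} [Fintype S] [DecidableEq S] (P : Matrix S S ℝ) : Prop :=
  ∃ n : ℕ, ∀ i j, 0 < (P ^ n) i j

/-- Irreducible: every state leads to every state in some positive number of steps. -/
def IsIrreducibleMat {S : Type*} [Fintype S] [DecidableEq S] (P : Matrix S S ℝ) : Prop :=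
  ∀ i j, ∃ n : ℕ, 0 < n ∧ 0 < (P ^ n) i j

/-- A stationary probability vector for `P`. -/
def IsStationaryVector {S : Type*} [Fintype S] (P : Matrix S S ℝ) (ppi : S → ℝ) : Prop :=
  (∀ i, 0 ≤ ppi i) ∧ (∑ i, ppi i = 1) ∧ ∀ j, ∑ i, ppi i * P i j = ppi j

/-- `μ` is the (stationary) Markov measure on `(ℤ → S)` determined by the stochastic
matrix `P` with stationary vector `ppi`. -/
def IsMarkovMeasure {S : Type*} [Fintype S] [MeasurableSpace S]
    (μ : Measure (ℤ → S)) (P : Matrix S S ℝ) (ppi : S → ℝ) : Prop :=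
  ∀ (m n : ℤ), m ≤ n → ∀ w : ℤ → S,
    μ {x | ∀ i : ℤ, m ≤ i → i ≤ n → x i = w i} =
      ENNReal.ofReal (ppi (w m) * ∏ i ∈ Finset.Ico m n, P (w i) (w (i + 1)))

/-- The entropy `h(P) = -∑_{i,j} π_i P(i,j) log P(i,j)` of the Markov shift of `P`. -/
def markovEntropy {S : Type*} [Fintype S] (P : Matrix S S ℝ) (ppi : S → ℝ) : ℝ :=
  -∑ i, ∑ j, ppi i * P i j * Real.log (P i j)

/-- The weight `P(c_0,c_1) ⋯ P(c_{n-1},c_n)` of the path `c_0, …, c_n` in `P`. -/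
def cycleWeight {S : Type*} (P : Matrix S S ℝ) (n : ℕ) (c : ℕ → S) : ℝ :=
  ∏ i ∈ Finset.range n, P (c i) (c (i + 1))

/-- `c` describes a cycle of length `n`: it returns to its starting state. -/
def IsCycle {S : Type*} (n : ℕ) (c : ℕ → S) : Prop := c n = c 0

/-- Krieger's Δ-group: the multiplicative subgroup of the positive reals (inside `ℝˣ`)
generated by ratios of strictly positive weights of two cycles of the same length through
the same state. -/
def DeltaGroup {S : Type*} (P : Matrix S S ℝ) : Subgroup ℝˣ :=
  Subgroup.closure {u : ℝˣ | ∃ (n : ℕ) (c d : ℕ → S), 0 < n ∧ IsCycle n c ∧ IsCycle n d ∧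
    c 0 = d 0 ∧ 0 < cycleWeight P n c ∧ 0 < cycleWeight P n d ∧
    (u : ℝ) = cycleWeight P n c / cycleWeight P n d}

/-- The Γ-group of Parry–Schmidt: the multiplicative subgroup of the positive reals (inside
`ℝˣ`) generated by all strictly positive cycle weights. -/
def GammaGroup {S : Type*} (P : Matrix S S ℝ) : Subgroup ℝˣ :=
  Subgroup.closure {u : ℝˣ | ∃ (n : ℕ) (c : ℕ → S), 0 < n ∧ IsCycle n c ∧
    0 < cycleWeight P n c ∧ (u : ℝ) = cycleWeight P n c}

/-- The matrix `P^{(t)}` with entries `P(i,j)^t` where `P(i,j) > 0`, and `0` elsewhere,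
viewed as a complex matrix. -/
def betaMatrix {S : Type*} (P : Matrix S S ℝ) (t : ℝ) : Matrix S S ℂ :=
  Matrix.of fun i j => if 0 < P i j then ((P i j ^ t : ℝ) : ℂ) else 0

/-- Tuncel's β-function: `β_P(t)` is the spectral radius of `P^{(t)}`. -/
def betaFunction {S : Type*} [Fintype S] [DecidableEq S] (P : Matrix S S ℝ) (t : ℝ) : ℝ≥0∞ :=
  spectralRadius ℂ (betaMatrix P t)

/-- Two shift systems are finitarily isomorphic with finite expected code times (fect):
there is a finitary isomorphism such that the code lengths of the map and of its inverse
both have finite expectation. -/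
def FinitarilyIsomorphicFect {A B : Type*} [MeasurableSpace A] [MeasurableSpace B]
    (μ : Measure (ℤ → A)) (ν : Measure (ℤ → B)) : Prop :=
  ∃ (D : Set (ℤ → A)) (E : Set (ℤ → B)) (φ : (ℤ → A) → (ℤ → B)) (ψ : (ℤ → B) → (ℤ → A)),
    IsFinitaryIsomorphism μ ν D E φ ψ ∧
    (∫⁻ x, codeLength D φ x ∂μ) < ⊤ ∧ (∫⁻ y, codeLength E ψ y ∂ν) < ⊤

/-
Let `φ` be the isomorphism. Since its code length is integrable, Borel–Cantelli gives for almost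
every `x` an `N` such that each coordinate `m` of `φ x` with `|m| ≥ N` is coded by a window that
does not reach beyond the origin. If this holds at times `0` and `n`, then changing `x` inside
`(0, n)` changes `φ x` only inside `(-N, n + N)`, so `φ` sends the `P`-paths of length `n` from
`x 0` to `x n` injectively to `Q`-paths of length `n + 2 * N` between fixed endpoints. Replacing a
block multiplies the measure of a set by a ratio of path weights, on either side of `φ`; hence the
weight of a path and that of its image have a ratio `K` that does not depend on the path. Summing
`t`-th powers gives `(P^(t))^n (x 0) (x n) ≤ K^t * (Q^(t))^(n + 2 * N) k l` for all `t` at once.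
The case `t = 1` and primitivity of `P` bound `K` below uniformly in `n`; it is bounded above
because `φ` maps almost all of the cylinder of `x` over `[0, n]` into that of `φ x` over
`[N, n - N]`. Taking `n`-th roots yields `β_P(t) ≤ β_Q(t)`.
-/

/-- The two-sided sequence `x` read from position `j` on, i.e. the `j`-th power of `shift`,
for `j` of either sign. -/
def shiftBy {A : Type*} (j : ℤ) (x : ℤ → A) : ℤ → A := fun i => x (i + j)

/-- The cylinder of the sequences that spell the same word as `w` on the window `[a, b]`; a word
is encoded by any sequence containing it. -/
def cyl {A : Type*} (a b : ℤ) (w : ℤ → A) : Set (ℤ → A) := {x | Set.EqOn x w (Set.Icc a b)}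

/-- The sequence obtained from `x` by writing the word of `w` on the window `[a, b]`. -/
def splice {A : Type*} (a b : ℤ) (w x : ℤ → A) : ℤ → A := (Set.Icc a b).piecewise w x

/-- The weight `P(x_a, x_{a+1}) ⋯ P(x_{b-1}, x_b)` of the path that `x` follows along `[a, b]`. -/
def pathWeight {S : Type*} (P : Matrix S S ℝ) (a b : ℤ) (x : ℤ → S) : ℝ :=
  ∏ i ∈ Finset.Ico a b, P (x i) (x (i + 1))

section Sequences

variable {A : Type*} {a b : ℤ} {u w x y z : ℤ → A}

lemma mem_cyl_self (a b : ℤ) (x : ℤ → A) : x ∈ cyl a b x := Set.eqOn_refl x _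

lemma cyl_symm (h : x ∈ cyl a b w) : w ∈ cyl a b x := Set.EqOn.symm h

lemma cyl_trans (hxy : x ∈ cyl a b y) (hyz : y ∈ cyl a b z) : x ∈ cyl a b z :=
  Set.EqOn.trans hxy hyz

lemma cyl_congr (h : u ∈ cyl a b w) : cyl a b u = cyl a b w :=
  Set.ext fun _ => ⟨fun hx => cyl_trans hx h, fun hx => cyl_trans hx (cyl_symm h)⟩

lemma cyl_mono {a' b' : ℤ} (ha : a' ≤ a) (hb : b ≤ b') : cyl a' b' w ⊆ cyl a b w :=
  fun _ hx => Set.EqOn.mono (Set.Icc_subset_Icc ha hb) hx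

lemma cyl_eq_preimage_restrict (a b : ℤ) (w : ℤ → A) :
    cyl a b w = (Finset.Icc a b).restrict (π := fun _ => A) ⁻¹' {(Finset.Icc a b).restrict w} := by
  ext x
  simp only [cyl, Set.mem_ofPred_eq, Set.mem_preimage, Set.mem_singleton_iff, Finset.restrict_def,
    funext_iff, Subtype.forall, Finset.mem_Icc]
  rfl

lemma shiftBy_mem_cyl {j : ℤ} : shiftBy j x ∈ cyl a b (shiftBy j w) ↔ x ∈ cyl (a + j) (b + j) w :=
  ⟨fun h i hi => by
      simpa [shiftBy] using h (x := i - j) ⟨le_sub_iff_add_le.2 hi.1, sub_le_iff_le_add.2 hi.2⟩,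
    fun h i hi => h (x := i + j) ⟨add_le_add_left hi.1 j, add_le_add_left hi.2 j⟩⟩

lemma shiftBy_zero (x : ℤ → A) : shiftBy 0 x = x := by
  funext i
  simp only [shiftBy, add_zero]

lemma shiftBy_shiftBy (j k : ℤ) (x : ℤ → A) : shiftBy j (shiftBy k x) = shiftBy (j + k) x := by
  funext i
  simp only [shiftBy, add_assoc]

lemma splice_apply_of_mem {i : ℤ} (hi : i ∈ Set.Icc a b) : splice a b w x i = w i :=
  Set.piecewise_eq_of_mem _ _ _ hi

lemma splice_apply_of_notMem {i : ℤ} (hi : i ∉ Set.Icc a b) : splice a b w x i = x i :=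
  Set.piecewise_eq_of_notMem _ _ _ hi

lemma splice_mem_cyl (a b : ℤ) (w x : ℤ → A) : splice a b w x ∈ cyl a b w :=
  fun _ => splice_apply_of_mem

lemma splice_splice (a b : ℤ) (w u x : ℤ → A) :
    splice a b w (splice a b u x) = splice a b w x :=
  funext fun i => by
    by_cases hi : i ∈ Set.Icc a b
    · rw [splice_apply_of_mem hi, splice_apply_of_mem hi]
    · rw [splice_apply_of_notMem hi, splice_apply_of_notMem hi, splice_apply_of_notMem hi]

lemma splice_eq_self (h : x ∈ cyl a b w) : splice a b w x = x := by
  funext i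
  by_cases hi : i ∈ Set.Icc a b
  · rw [splice_apply_of_mem hi, h hi]
  · exact splice_apply_of_notMem hi

lemma splice_eq_of_eqOn_compl (h : Set.EqOn z x (Set.Ioo a b)ᶜ) : splice a b z x = z := by
  funext i
  by_cases hi : i ∈ Set.Icc a b
  · exact splice_apply_of_mem hi
  · rw [splice_apply_of_notMem hi, h fun hi' => hi (Set.Ioo_subset_Icc_self hi')]

lemma splice_congr (h : u ∈ cyl a b w) : splice a b u = splice a b w :=
  funext fun x => funext fun i => by
    by_cases hi : i ∈ Set.Icc a b
    · rw [splice_apply_of_mem hi, splice_apply_of_mem hi, h hi]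
    · rw [splice_apply_of_notMem hi, splice_apply_of_notMem hi]

lemma preimage_splice_inter_cyl {a' b' : ℤ} (ha : a' ≤ a) (hb : b ≤ b') (hx : x ∈ cyl a b u) :
    splice a b u ⁻¹' cyl a' b' x ∩ cyl a b w = cyl a' b' (splice a b w x) := by
  ext y
  constructor
  · rintro ⟨hyx, hyw⟩ i hi
    by_cases h : i ∈ Set.Icc a b
    · rw [hyw h, splice_apply_of_mem h]
    · rw [splice_apply_of_notMem h, ← hyx hi, splice_apply_of_notMem h]
  · intro hy
    refine ⟨fun i hi => ?_, cyl_trans (cyl_mono ha hb hy) (splice_mem_cyl a b w x)⟩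
    by_cases h : i ∈ Set.Icc a b
    · rw [splice_apply_of_mem h, hx h]
    · rw [splice_apply_of_notMem h, hy hi, splice_apply_of_notMem h]

lemma image_splice {X : Set (ℤ → A)} (hX : X ⊆ cyl a b w) :
    splice a b u '' X = splice a b w ⁻¹' X ∩ cyl a b u := by
  ext y
  constructor
  · rintro ⟨x, hx, rfl⟩
    refine ⟨?_, splice_mem_cyl a b u x⟩
    rwa [Set.mem_preimage, splice_splice, splice_eq_self (hX hx)]
  · rintro ⟨hyX, hyu⟩
    exact ⟨splice a b w y, hyX, by rw [splice_splice, splice_eq_self hyu]⟩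

lemma finite_range_of_cyl_congr [Finite A] {β : Type*} {f : (ℤ → A) → β} (a b : ℤ)
    (hf : ∀ u w, u ∈ cyl a b w → f u = f w) : (Set.range f).Finite := by
  rcases isEmpty_or_nonempty (ℤ → A) with h | ⟨⟨x₀⟩⟩
  · exact Set.range_eq_empty f ▸ Set.finite_empty
  · have : Nonempty β := ⟨f x₀⟩
    have hfac : f.FactorsThrough (Finset.Icc a b).restrict := fun u w huw =>
      hf u w (cyl_eq_preimage_restrict a b w ▸ huw)
    obtain ⟨g, rfl⟩ := (Function.factorsThrough_iff f).1 hfac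
    exact (Set.finite_range g).subset (Set.range_comp_subset_range _ g)

lemma ae_of_forall_cyl [Finite A] {Ω : Type*} [MeasurableSpace Ω] {μ : Measure Ω}
    (f : Ω → ℤ → A) (a b : ℤ) {p : Ω → Prop}
    (h : ∀ w, ∀ᵐ x ∂μ, f x ∈ cyl a b w → p x) : ∀ᵐ x ∂μ, p x := by
  have hfin : (Set.range (cyl a b : (ℤ → A) → Set (ℤ → A))).Finite :=
    finite_range_of_cyl_congr a b fun _ _ => cyl_congr
  filter_upwards [(ae_ball_iff hfin.countable (p := fun x C _ => f x ∈ C → p x)).2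
    (Set.forall_mem_range.2 h)] with x hx
  exact hx (cyl a b (f x)) ⟨f x, rfl⟩ (mem_cyl_self a b (f x))

variable [MeasurableSpace A]

lemma measurable_shiftBy (j : ℤ) : Measurable (shiftBy j : (ℤ → A) → ℤ → A) :=
  measurable_pi_lambda _ fun i => measurable_pi_apply (i + j)

lemma measurable_splice (a b : ℤ) (w : ℤ → A) : Measurable (splice a b w) := by
  refine measurable_pi_lambda _ fun i => ?_
  by_cases hi : i ∈ Set.Icc a b
  · simp only [splice_apply_of_mem hi, measurable_const]
  · simp only [splice_apply_of_notMem hi, measurable_pi_apply i]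

lemma measurableSet_cyl [Countable A] [DiscreteMeasurableSpace A] (a b : ℤ) (w : ℤ → A) :
    MeasurableSet (cyl a b w) := by
  rw [cyl_eq_preimage_restrict]
  exact Finset.measurable_restrict _ (MeasurableSet.of_discrete)

lemma measure_ext_of_cyl [Finite A] [DiscreteMeasurableSpace A] {μ ν : Measure (ℤ → A)}
    [IsFiniteMeasure ν] (k₀ : ℕ)
    (h : ∀ k : ℕ, k₀ ≤ k → ∀ w, μ (cyl (-k) k w) = ν (cyl (-k) k w)) : μ = ν := by
  suffices hmap : ∀ I : Finset ℤ, μ.map I.restrict = ν.map I.restrict from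
    IsProjectiveLimit.unique (P := fun I : Finset ℤ => ν.map I.restrict) hmap fun _ => rfl
  intro I
  obtain ⟨k, hk, hIk⟩ : ∃ k : ℕ, k₀ ≤ k ∧ I ⊆ Finset.Icc (-k : ℤ) k :=
    ⟨max k₀ (I.sup Int.natAbs), le_max_left _ _, fun i hi => by
      have := Finset.le_sup (f := Int.natAbs) hi
      rw [Finset.mem_Icc]
      omega⟩
  have hwindow : μ.map (Finset.Icc (-k : ℤ) k).restrict =
      ν.map (Finset.Icc (-k : ℤ) k).restrict := by
    refine Measure.ext_of_singleton fun v => ?_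
    rw [Measure.map_apply (Finset.measurable_restrict _) (MeasurableSet.singleton v),
      Measure.map_apply (Finset.measurable_restrict _) (MeasurableSet.singleton v)]
    obtain hv | ⟨w, rfl⟩ :=
      ((Finset.Icc (-k : ℤ) k).restrict (π := fun _ => A) ⁻¹' {v}).eq_empty_or_nonempty
    · rw [hv, measure_empty, measure_empty]
    · rw [← cyl_eq_preimage_restrict, h k hk w]
  rw [← Finset.restrict₂_comp_restrict hIk,
    ← Measure.map_map (Finset.measurable_restrict₂ hIk) (Finset.measurable_restrict _), hwindow,
    Measure.map_map (Finset.measurable_restrict₂ hIk) (Finset.measurable_restrict _)]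

lemma ae_forall_splice [Finite A] {μ : Measure (ℤ → A)} (a b : ℤ)
    {p : (ℤ → A) → (ℤ → A) → Prop}
    (h : ∀ u, ∀ᵐ x ∂μ, p (splice a b u x) x) : ∀ᵐ x ∂μ, ∀ u, p (splice a b u x) x := by
  have hfin : (Set.range (splice a b : (ℤ → A) → (ℤ → A) → ℤ → A)).Finite :=
    finite_range_of_cyl_congr a b fun _ _ => splice_congr
  filter_upwards [(ae_ball_iff hfin.countable (p := fun x f _ => p (f x) x)).2
    (Set.forall_mem_range.2 h)] with x hx u
  exact hx (splice a b u) ⟨u, rfl⟩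

end Sequences

section PathWeight

variable {S : Type*} {P : Matrix S S ℝ} {a b a' b' : ℤ} {u v w x : ℤ → S}

lemma pathWeight_congr (h : u ∈ cyl a b w) : pathWeight P a b u = pathWeight P a b w := by
  refine Finset.prod_congr rfl fun i hi => ?_
  rw [Finset.mem_Ico] at hi
  rw [h ⟨hi.1, hi.2.le⟩, h ⟨by omega, by omega⟩]

lemma pathWeight_mul {c : ℤ} (hab : a ≤ b) (hbc : b ≤ c) (x : ℤ → S) :
    pathWeight P a b x * pathWeight P b c x = pathWeight P a c x := by
  unfold pathWeight
  rw [← Finset.prod_union (Finset.Ico_disjoint_Ico_consecutive a b c),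
    Finset.Ico_union_Ico_eq_Ico hab hbc]

lemma pathWeight_shiftBy (a b j : ℤ) (x : ℤ → S) :
    pathWeight P a b (shiftBy j x) = pathWeight P (a + j) (b + j) x := by
  unfold pathWeight
  rw [← Finset.map_add_right_Ico, Finset.prod_map]
  refine Finset.prod_congr rfl fun i _ => ?_
  simp only [shiftBy, addRightEmbedding_apply, add_right_comm i 1 j]

lemma pathWeight_splice_mul (ha' : a' ≤ a) (hab : a ≤ b) (hb' : b ≤ b') (ha : v a = w a)
    (hb : v b = w b) :
    pathWeight P a' b' (splice a b w v) * pathWeight P a b v =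
      pathWeight P a b w * pathWeight P a' b' v := by
  have hleft : splice a b w v ∈ cyl a' a v := fun i hi => by
    rcases hi.2.eq_or_lt with rfl | hia
    · rw [splice_apply_of_mem ⟨le_rfl, hab⟩, ha]
    · exact splice_apply_of_notMem fun h => (h.1.trans_lt hia).false
  have hright : splice a b w v ∈ cyl b b' v := fun i hi => by
    rcases hi.1.eq_or_lt with rfl | hbi
    · rw [splice_apply_of_mem ⟨hab, le_rfl⟩, hb]
    · exact splice_apply_of_notMem fun h => (h.2.trans_lt hbi).false
  simp only [← pathWeight_mul ha' (hab.trans hb'), ← pathWeight_mul hab hb',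
    pathWeight_congr hleft, pathWeight_congr hright, pathWeight_congr (splice_mem_cyl a b w v)]
  ring

lemma pathWeight_nonneg (hP : ∀ i j, 0 ≤ P i j) (a b : ℤ) (x : ℤ → S) : 0 ≤ pathWeight P a b x :=
  Finset.prod_nonneg fun _ _ => hP _ _

lemma pow_mul_pathWeight_le (hP : ∀ i j, 0 ≤ P i j) {δ : ℝ} (hδ0 : 0 ≤ δ)
    (hδ : ∀ i j, 0 < P i j → δ ≤ P i j) (p q : ℕ) (hab : a ≤ b)
    (hx : 0 < pathWeight P (a - p) (b + q) x) :
    δ ^ (p + q) * pathWeight P a b x ≤ pathWeight P (a - p) (b + q) x := by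
  have hside : ∀ (c : ℤ) (k : ℕ), a - p ≤ c → c + k ≤ b + q → δ ^ k ≤ pathWeight P c (c + k) x := by
    intro c k hc hk
    calc δ ^ k = ∏ _i ∈ Finset.Ico c (c + k), δ := by simp
      _ ≤ pathWeight P c (c + k) x := by
        refine Finset.prod_le_prod (fun _ _ => hδ0) fun i hi => hδ _ _ ?_
        rw [Finset.mem_Ico] at hi
        exact (hP _ _).lt_of_ne' (Finset.prod_ne_zero_iff.1 hx.ne' i
          (Finset.mem_Ico.2 ⟨by omega, by omega⟩))
  have hleft := hside (a - p) p le_rfl (by omega)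
  have hright := hside b q (by omega) le_rfl
  rw [sub_add_cancel] at hleft
  have hmid := pathWeight_nonneg hP a b x
  calc δ ^ (p + q) * pathWeight P a b x = δ ^ p * (pathWeight P a b x * δ ^ q) := by ring
    _ ≤ pathWeight P (a - p) a x * (pathWeight P a b x * pathWeight P b (b + q) x) := by
      have := pathWeight_nonneg hP (a - p) a x
      gcongr
    _ = pathWeight P (a - p) (b + q) x := by
      rw [pathWeight_mul hab (by omega), pathWeight_mul (by omega) (by omega)]

end PathWeight

section Markov

variable {S : Type*} [Fintype S] [MeasurableSpace S] {P : Matrix S S ℝ} {ppi : S → ℝ}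
  {μ : Measure (ℤ → S)}

lemma IsMarkovMeasure.measure_cyl (hμ : IsMarkovMeasure μ P ppi) {a b : ℤ} (hab : a ≤ b)
    (w : ℤ → S) : μ (cyl a b w) = ENNReal.ofReal (ppi (w a) * pathWeight P a b w) := by
  have : cyl a b w = {x | ∀ i, a ≤ i → i ≤ b → x i = w i} :=
    Set.ext fun _ => ⟨fun h i ha hb => h ⟨ha, hb⟩, fun h i hi => h i hi.1 hi.2⟩
  rw [this, hμ a b hab w, pathWeight]

lemma IsMarkovMeasure.ae_pathWeight_pos (hμ : IsMarkovMeasure μ P ppi)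
    (hP : ∀ i j, 0 ≤ P i j) (hppi : ∀ i, 0 ≤ ppi i) {a b : ℤ} (hab : a ≤ b) :
    ∀ᵐ x ∂μ, 0 < ppi (x a) ∧ 0 < pathWeight P a b x := by
  refine ae_of_forall_cyl (fun x => x) a b fun w => ?_
  by_cases hw : 0 < ppi (w a) * pathWeight P a b w
  · refine .of_forall fun x hx => ?_
    rw [pathWeight_congr hx, hx ⟨le_rfl, hab⟩]
    exact ⟨pos_of_mul_pos_left hw (pathWeight_nonneg hP a b w), pos_of_mul_pos_right hw (hppi _)⟩
  · have : μ (cyl a b w) = 0 := by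
      rw [hμ.measure_cyl hab, ENNReal.ofReal_eq_zero]
      exact not_lt.1 hw
    filter_upwards [measure_eq_zero_iff_ae_notMem.1 this] with x hx hxw
    exact (hx hxw).elim

lemma IsMarkovMeasure.measure_cyl_splice (hμ : IsMarkovMeasure μ P ppi) (hP : ∀ i j, 0 ≤ P i j)
    {a b a' b' : ℤ} (ha' : a' < a) (hab : a ≤ b) (hb' : b ≤ b') {v w : ℤ → S} (ha : v a = w a)
    (hb : v b = w b) :
    ENNReal.ofReal (pathWeight P a b v) * μ (cyl a' b' (splice a b w v)) =
      ENNReal.ofReal (pathWeight P a b w) * μ (cyl a' b' v) := by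
  rw [hμ.measure_cyl (by omega), hμ.measure_cyl (by omega),
    ← ENNReal.ofReal_mul (pathWeight_nonneg hP _ _ _),
    ← ENNReal.ofReal_mul (pathWeight_nonneg hP _ _ _),
    splice_apply_of_notMem (i := a') fun h => (ha'.trans_le h.1).false, mul_left_comm,
    mul_comm (pathWeight P a b v), pathWeight_splice_mul ha'.le hab hb' ha hb, mul_left_comm]

variable [DiscreteMeasurableSpace S]

lemma IsMarkovMeasure.isProbabilityMeasure (hμ : IsMarkovMeasure μ P ppi)
    (hppi : IsStationaryVector P ppi) : IsProbabilityMeasure μ := by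
  refine ⟨?_⟩
  have hcyl : ∀ s : S, (fun x : ℤ → S => x 0) ⁻¹' {s} = cyl 0 0 fun _ => s := fun s => by
    ext x
    simp [cyl]
  have hsum := sum_measure_preimage_singleton (μ := μ) (f := fun x : ℤ → S => x 0) Finset.univ
    fun s _ => measurable_pi_apply 0 (MeasurableSet.singleton s)
  rw [Finset.coe_univ, Set.preimage_univ] at hsum
  simp only [hcyl, hμ.measure_cyl le_rfl, pathWeight, Finset.Ico_self, Finset.prod_empty,
    mul_one] at hsum
  rw [← hsum, ← ENNReal.ofReal_sum_of_nonneg fun i _ => hppi.1 i, hppi.2.1, ENNReal.ofReal_one]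

variable [IsFiniteMeasure μ]

lemma IsMarkovMeasure.measurePreserving_shiftBy (hμ : IsMarkovMeasure μ P ppi) (j : ℤ) :
    MeasurePreserving (shiftBy j) μ μ := by
  refine ⟨measurable_shiftBy j, measure_ext_of_cyl 0 fun k _ w => ?_⟩
  have hpre : shiftBy j ⁻¹' cyl (-(k : ℤ)) k w = cyl (-(k : ℤ) + j) (k + j) (shiftBy (-j) w) := by
    ext x
    rw [Set.mem_preimage, ← shiftBy_mem_cyl, shiftBy_shiftBy, add_neg_cancel, shiftBy_zero]
  rw [Measure.map_apply (measurable_shiftBy j) (measurableSet_cyl _ _ _), hpre,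
    hμ.measure_cyl (by omega), hμ.measure_cyl (by omega), ← pathWeight_shiftBy,
    shiftBy_shiftBy, add_neg_cancel, shiftBy_zero]
  simp [shiftBy]

lemma IsMarkovMeasure.smul_map_splice (hμ : IsMarkovMeasure μ P ppi) (hP : ∀ i j, 0 ≤ P i j)
    {a b : ℤ} (hab : a ≤ b) {u w : ℤ → S} (ha : u a = w a) (hb : u b = w b) :
    ENNReal.ofReal (pathWeight P a b u) • (μ.restrict (cyl a b w)).map (splice a b u) =
      ENNReal.ofReal (pathWeight P a b w) • μ.restrict (cyl a b u) := by
  have : IsFiniteMeasure (ENNReal.ofReal (pathWeight P a b w) • μ.restrict (cyl a b u)) :=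
    Measure.smul_finite _ ENNReal.ofReal_ne_top
  refine measure_ext_of_cyl (a.natAbs + b.natAbs + 1) fun k hk v => ?_
  simp only [Measure.smul_apply, smul_eq_mul]
  rw [Measure.map_apply (measurable_splice a b u) (measurableSet_cyl _ _ v),
    Measure.restrict_apply (measurable_splice a b u (measurableSet_cyl _ _ v)),
    Measure.restrict_apply (measurableSet_cyl _ _ v)]
  have hmono {y : ℤ → S} : cyl (-(k : ℤ)) k y ⊆ cyl a b y := cyl_mono (by omega) (by omega)
  by_cases hv : v ∈ cyl a b u
  · have hinter : cyl (-(k : ℤ)) k v ∩ cyl a b u = cyl (-(k : ℤ)) k v :=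
      Set.inter_eq_left.2 fun x hx => cyl_trans (hmono hx) hv
    rw [preimage_splice_inter_cyl (by omega) (by omega) hv, hinter, ← pathWeight_congr hv]
    exact hμ.measure_cyl_splice hP (by omega) hab (by omega)
      ((hv ⟨le_rfl, hab⟩).trans ha) ((hv ⟨hab, le_rfl⟩).trans hb)
  · have hpre : splice a b u ⁻¹' cyl (-(k : ℤ)) k v ∩ cyl a b w = ∅ :=
      Set.eq_empty_of_forall_notMem fun x hx =>
        hv (cyl_trans (cyl_symm (hmono hx.1)) (splice_mem_cyl a b u x))
    have hinter : cyl (-(k : ℤ)) k v ∩ cyl a b u = ∅ :=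
      Set.eq_empty_of_forall_notMem fun x hx => hv (cyl_trans (cyl_symm (hmono hx.1)) hx.2)
    rw [hpre, hinter, measure_empty, mul_zero, mul_zero]

lemma IsMarkovMeasure.measure_preimage_splice (hμ : IsMarkovMeasure μ P ppi)
    (hP : ∀ i j, 0 ≤ P i j) {a b : ℤ} (hab : a ≤ b) {u w : ℤ → S} (ha : u a = w a)
    (hb : u b = w b) {X : Set (ℤ → S)} (hX : MeasurableSet X) :
    ENNReal.ofReal (pathWeight P a b u) * μ (splice a b u ⁻¹' X ∩ cyl a b w) =
      ENNReal.ofReal (pathWeight P a b w) * μ (X ∩ cyl a b u) := by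
  have := congrArg (fun m : Measure (ℤ → S) => m X) (hμ.smul_map_splice hP hab ha hb)
  simpa only [Measure.smul_apply, smul_eq_mul, Measure.map_apply (measurable_splice a b u) hX,
    Measure.restrict_apply (measurable_splice a b u hX), Measure.restrict_apply hX] using this

lemma IsMarkovMeasure.measure_image_splice (hμ : IsMarkovMeasure μ P ppi)
    (hP : ∀ i j, 0 ≤ P i j) {a b : ℤ} (hab : a ≤ b) {u w : ℤ → S} (ha : u a = w a)
    (hb : u b = w b) {X : Set (ℤ → S)} (hX : MeasurableSet X) (hXw : X ⊆ cyl a b w) :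
    ENNReal.ofReal (pathWeight P a b w) * μ (splice a b u '' X) =
      ENNReal.ofReal (pathWeight P a b u) * μ X := by
  rw [image_splice hXw, hμ.measure_preimage_splice hP hab ha.symm hb.symm hX,
    Set.inter_eq_left.2 hXw]

lemma IsMarkovMeasure.ae_splice (hμ : IsMarkovMeasure μ P ppi) (hP : ∀ i j, 0 ≤ P i j)
    {p : (ℤ → S) → Prop} (hp : ∀ᵐ x ∂μ, p x) {a b : ℤ} (hab : a ≤ b) (u : ℤ → S)
    (hu : 0 < pathWeight P a b u) :
    ∀ᵐ x ∂μ, u a = x a → u b = x b → p (splice a b u x) := by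
  refine ae_of_forall_cyl (fun x => x) a b fun w => ?_
  by_cases hw : u a = w a ∧ u b = w b
  · have hac : (μ.restrict (cyl a b w)).map (splice a b u) ≪ μ := by
      refine (Measure.absolutelyContinuous_smul (ENNReal.ofReal_pos.2 hu).ne').trans ?_
      rw [hμ.smul_map_splice hP hab hw.1 hw.2]
      exact Measure.smul_absolutelyContinuous.trans Measure.absolutelyContinuous_restrict
    have := (ae_restrict_iff' (measurableSet_cyl a b w)).1
      (ae_of_ae_map (measurable_splice a b u).aemeasurable (hac.ae_le hp))
    filter_upwards [this] with x hx hxw _ _ using hx hxw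
  · refine .of_forall fun x hx hua hub => (hw ⟨?_, ?_⟩).elim
    · rw [hua, hx ⟨le_rfl, hab⟩]
    · rw [hub, hx ⟨hab, le_rfl⟩]

end Markov

/-- The matrix `P^{(t)}` over the reals. -/
def powerMatrix {S : Type*} (P : Matrix S S ℝ) (t : ℝ) : Matrix S S ℝ :=
  Matrix.of fun i j => if 0 < P i j then P i j ^ t else 0

/-- The weight of a path of `n` steps in `P`, a path being encoded by its `n + 1` vertices. -/
def finPathWeight {S : Type*} (P : Matrix S S ℝ) {n : ℕ} (p : Fin (n + 1) → S) : ℝ :=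
  ∏ k : Fin n, P (p k.castSucc) (p k.succ)

open Classical in
/-- The paths of `n` steps from `i` to `j` that have positive weight in `P`. -/
def positivePaths {S : Type*} [Fintype S] (P : Matrix S S ℝ) (n : ℕ) (i j : S) :
    Finset (Fin (n + 1) → S) :=
  {p | p 0 = i ∧ p (Fin.last n) = j ∧ 0 < finPathWeight P p}

lemma exists_pos_le_of_pos {ι : Type*} [Finite ι] (f : ι → ℝ) :
    ∃ δ > 0, ∀ i, 0 < f i → δ ≤ f i := by
  have hev : ∀ᶠ δ in nhdsWithin (0 : ℝ) (Set.Ioi 0), ∀ i, 0 < f i → δ ≤ f i :=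
    eventually_all.2 fun i => by
      by_cases hi : 0 < f i
      · filter_upwards [Ioc_mem_nhdsGT hi] with δ hδ _ using hδ.2
      · exact .of_forall fun _ h => absurd h hi
  obtain ⟨δ, hδ, hδ0⟩ := (hev.and self_mem_nhdsWithin).exists
  exact ⟨δ, hδ0, hδ⟩

section PathSums

variable {S S' : Type*} {P : Matrix S S ℝ} {Q : Matrix S' S' ℝ}

lemma powerMatrix_nonneg (P : Matrix S S ℝ) (t : ℝ) (i j : S) : 0 ≤ powerMatrix P t i j := by
  rw [powerMatrix, Matrix.of_apply]
  split_ifs with h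
  · exact (Real.rpow_pos_of_pos h t).le
  · exact le_rfl

lemma powerMatrix_one (hP : ∀ i j, 0 ≤ P i j) : powerMatrix P 1 = P := by
  ext i j
  rw [powerMatrix, Matrix.of_apply, Real.rpow_one]
  split_ifs with h
  · rfl
  · exact le_antisymm (hP i j) (not_lt.1 h)

lemma betaMatrix_eq_map_powerMatrix (P : Matrix S S ℝ) (t : ℝ) :
    betaMatrix P t = (powerMatrix P t).map Complex.ofReal := by
  ext i j
  simp only [betaMatrix, powerMatrix, Matrix.of_apply, Matrix.map_apply]
  split_ifs <;> simp

lemma finPathWeight_powerMatrix (hP : ∀ i j, 0 ≤ P i j) (t : ℝ) {n : ℕ} (p : Fin (n + 1) → S) :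
    finPathWeight (powerMatrix P t) p =
      if 0 < finPathWeight P p then finPathWeight P p ^ t else 0 := by
  unfold finPathWeight
  split_ifs with h
  · rw [← Real.finsetProd_rpow _ _ fun k _ => hP _ _]
    refine Finset.prod_congr rfl fun k hk => ?_
    rw [powerMatrix, Matrix.of_apply,
      if_pos ((hP _ _).lt_of_ne' (Finset.prod_ne_zero_iff.1 h.ne' k hk))]
  · have h0 : ∏ k, P (p (Fin.castSucc k)) (p k.succ) = 0 :=
      le_antisymm (not_lt.1 h) (Finset.prod_nonneg fun _ _ => hP _ _)
    obtain ⟨k, hk, hk0⟩ := Finset.prod_eq_zero_iff.1 h0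
    exact Finset.prod_eq_zero hk (by simp [powerMatrix, hk0])

variable [Fintype S] [Fintype S']

lemma mem_positivePaths {n : ℕ} {i j : S} {p : Fin (n + 1) → S} :
    p ∈ positivePaths P n i j ↔ p 0 = i ∧ p (Fin.last n) = j ∧ 0 < finPathWeight P p := by
  simp [positivePaths]

variable [DecidableEq S] [DecidableEq S']

lemma pow_apply_eq_sum_finPathWeight (A : Matrix S S ℝ) (n : ℕ) (i j : S) :
    (A ^ n) i j =
      ∑ p : Fin (n + 1) → S, if p 0 = i ∧ p (Fin.last n) = j then finPathWeight A p else 0 := by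
  induction n generalizing i with
  | zero =>
    rw [Fintype.sum_equiv (Equiv.funUnique (Fin 1) S) _
      (fun s : S => if s = i ∧ s = j then (1 : ℝ) else 0) fun p => by simp [finPathWeight]]
    simp only [pow_zero, Matrix.one_apply, ite_and, Finset.sum_ite_eq', Finset.mem_univ, if_true]
  | succ n ih =>
    rw [← Fintype.sum_equiv (Fin.consEquiv fun _ : Fin (n + 2) => S)
      (fun sp : S × (Fin (n + 1) → S) => if sp.1 = i ∧ sp.2 (Fin.last n) = j then
        A sp.1 (sp.2 0) * finPathWeight A sp.2 else 0) _ fun sp => by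
          simp only [Fin.consEquiv_apply, finPathWeight, Fin.prod_univ_succ (n := n),
            Fin.castSucc_zero, Fin.cons_zero, Fin.cons_succ, ← Fin.succ_last,
            ← Fin.succ_castSucc],
      Fintype.sum_prod_type, pow_succ', Matrix.mul_apply]
    simp only [ite_and, Finset.sum_ite_irrel, Finset.sum_const_zero, Finset.sum_ite_eq',
      Finset.mem_univ, if_true, ih, Finset.mul_sum]
    rw [Finset.sum_comm]
    refine Finset.sum_congr rfl fun p _ => ?_
    simp only [mul_ite, mul_zero, Finset.sum_ite_eq, Finset.mem_univ, if_true]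

lemma powerMatrix_pow_apply (hP : ∀ i j, 0 ≤ P i j) (t : ℝ) (n : ℕ) (i j : S) :
    (powerMatrix P t ^ n) i j = ∑ p ∈ positivePaths P n i j, finPathWeight P p ^ t := by
  rw [pow_apply_eq_sum_finPathWeight, positivePaths, Finset.sum_filter]
  refine Finset.sum_congr rfl fun p _ => ?_
  simp only [finPathWeight_powerMatrix hP, ite_and]
  split_ifs <;> rfl

lemma powerMatrix_pow_apply_pos (hP : ∀ i j, 0 ≤ P i j) (t : ℝ) {n : ℕ} {i j : S}
    (hpos : 0 < (P ^ n) i j) : 0 < (powerMatrix P t ^ n) i j := by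
  rw [← powerMatrix_one hP, powerMatrix_pow_apply hP] at hpos
  rw [powerMatrix_pow_apply hP]
  exact Finset.sum_pos (fun p hp => Real.rpow_pos_of_pos (mem_positivePaths.1 hp).2.2 t)
    (Finset.nonempty_of_sum_ne_zero hpos.ne')

lemma powerMatrix_pow_apply_le_of_coding (hP : ∀ i j, 0 ≤ P i j) (hQ : ∀ i j, 0 ≤ Q i j)
    {n m : ℕ} {i j : S} {k l : S'} {K : ℝ} (hK : 0 ≤ K)
    (Φ : (Fin (n + 1) → S) → (Fin (m + 1) → S'))
    (hmaps : Set.MapsTo Φ (positivePaths P n i j) (positivePaths Q m k l))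
    (hinj : Set.InjOn Φ (positivePaths P n i j))
    (hweight : ∀ p ∈ positivePaths P n i j, finPathWeight P p = K * finPathWeight Q (Φ p))
    (t : ℝ) : (powerMatrix P t ^ n) i j ≤ K ^ t * (powerMatrix Q t ^ m) k l := by
  classical
  rw [powerMatrix_pow_apply hP, powerMatrix_pow_apply hQ]
  calc ∑ p ∈ positivePaths P n i j, finPathWeight P p ^ t
      = ∑ p ∈ positivePaths P n i j, K ^ t * finPathWeight Q (Φ p) ^ t :=
        Finset.sum_congr rfl fun p hp => by
          rw [hweight p hp, Real.mul_rpow hK (mem_positivePaths.1 (hmaps hp)).2.2.le]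
    _ = K ^ t * ∑ q ∈ (positivePaths P n i j).image Φ, finPathWeight Q q ^ t := by
        rw [← Finset.mul_sum, Finset.sum_image hinj]
    _ ≤ K ^ t * ∑ q ∈ positivePaths Q m k l, finPathWeight Q q ^ t := by
        refine mul_le_mul_of_nonneg_left ?_ (Real.rpow_nonneg hK t)
        exact Finset.sum_le_sum_of_subset_of_nonneg (Finset.image_subset_iff.2 hmaps)
          fun q hq _ => Real.rpow_nonneg (mem_positivePaths.1 hq).2.2.le t

end PathSums

section MatrixPowers

variable {S : Type*} [Fintype S] [DecidableEq S]

lemma IsStochastic.mem_rowStochastic {P : Matrix S S ℝ} (hP : IsStochastic P) :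
    P ∈ Matrix.rowStochastic ℝ S :=
  Matrix.mem_rowStochastic_iff_sum.2 hP

lemma IsStochastic.pow_apply_le_one {P : Matrix S S ℝ} (hP : IsStochastic P) (n : ℕ) (i j : S) :
    (P ^ n) i j ≤ 1 :=
  Matrix.le_one_of_mem_rowStochastic (pow_mem hP.mem_rowStochastic n)

lemma IsPrimitive.exists_forall_le_pow_apply {P : Matrix S S ℝ} (hprim : IsPrimitive P)
    (hP : IsStochastic P) : ∃ c > 0, ∀ᶠ n in atTop, ∀ i j, c ≤ (P ^ n) i j := by
  obtain ⟨m, hm⟩ := hprim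
  obtain ⟨c, hc, hcm⟩ := exists_pos_le_of_pos fun ij : S × S => (P ^ m) ij.1 ij.2
  refine ⟨c, hc, eventually_atTop.2 ⟨m, fun n hn => ?_⟩⟩
  induction n, hn using Nat.le_induction with
  | base => exact fun i j => hcm (i, j) (hm i j)
  | succ n _ ih =>
    intro i j
    calc c = ∑ k, P i k * c := by rw [← Finset.sum_mul, hP.2, one_mul]
      _ ≤ ∑ k, P i k * (P ^ n) k j :=
        Finset.sum_le_sum fun k _ => mul_le_mul_of_nonneg_left (ih k j) (hP.1 i k)
      _ = (P ^ (n + 1)) i j := by rw [pow_succ', Matrix.mul_apply]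

variable {A : Matrix S S ℝ}

lemma pow_apply_mul_pow_apply_le (hA : ∀ i j, 0 ≤ A i j) (m n : ℕ) (i k j : S) :
    (A ^ m) i k * (A ^ n) k j ≤ (A ^ (m + n)) i j := by
  rw [pow_add, Matrix.mul_apply]
  exact Finset.single_le_sum (f := fun k => (A ^ m) i k * (A ^ n) k j)
    (fun l _ => mul_nonneg (Matrix.pow_apply_nonneg hA m i l) (Matrix.pow_apply_nonneg hA n l j))
    (Finset.mem_univ k)

lemma exists_pos_mul_pow_apply_le (hA : ∀ i j, 0 ≤ A i j) {m : ℕ}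
    (hm : ∀ i j, 0 < (A ^ m) i j) :
    ∃ δ > 0, ∀ n i j k l, δ * (A ^ n) k l ≤ (A ^ (m + n + m)) i j := by
  obtain ⟨c, hc, hcm⟩ := exists_pos_le_of_pos fun ij : S × S => (A ^ m) ij.1 ij.2
  refine ⟨c * c, mul_pos hc hc, fun n i j k l => ?_⟩
  have hnn := Matrix.pow_apply_nonneg hA
  calc c * c * (A ^ n) k l = c * (A ^ n) k l * c := by ring
    _ ≤ (A ^ m) i k * (A ^ n) k l * (A ^ m) l j := by
      have := hnn n k l
      have := hnn m i k
      have := hcm (i, k) (hm i k)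
      have := hcm (l, j) (hm l j)
      gcongr
    _ ≤ (A ^ (m + n)) i l * (A ^ m) l j :=
      mul_le_mul_of_nonneg_right (pow_apply_mul_pow_apply_le hA m n i k l) (hnn m l j)
    _ ≤ (A ^ (m + n + m)) i j := pow_apply_mul_pow_apply_le hA (m + n) m i l j

end MatrixPowers

section SpectralRadius

lemma spectralRadius_le_of_eventually_norm_pow_le {A B : Type*} [NormedRing A]
    [NormedAlgebra ℂ A] [CompleteSpace A] [NormedRing B] [NormedAlgebra ℂ B] [CompleteSpace B]
    {a : A} {b : B} {C : ℝ} (hC : 0 < C) (h : ∀ᶠ n : ℕ in atTop, ‖a ^ n‖ ≤ C * ‖b ^ n‖) :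
    spectralRadius ℂ a ≤ spectralRadius ℂ b := by
  have hroot : Tendsto (fun n : ℕ => ENNReal.ofReal (C ^ (1 / n : ℝ))) atTop (nhds 1) := by
    rw [← ENNReal.ofReal_one]
    refine (ENNReal.continuous_ofReal.tendsto _).comp ?_
    simpa using tendsto_const_nhds.rpow (tendsto_one_div_atTop_nhds_zero_nat (𝕜 := ℝ))
      (Or.inl hC.ne')
  have hb := ENNReal.Tendsto.mul hroot (Or.inl one_ne_zero)
    (spectrum.pow_norm_pow_one_div_tendsto_nhds_spectralRadius b) (Or.inr ENNReal.one_ne_top)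
  rw [one_mul] at hb
  refine le_of_tendsto_of_tendsto
    (spectrum.pow_norm_pow_one_div_tendsto_nhds_spectralRadius a) hb (h.mono fun n hn => ?_)
  beta_reduce
  rw [← ENNReal.ofReal_mul (Real.rpow_nonneg hC.le _), ← Real.mul_rpow hC.le (norm_nonneg _)]
  exact ENNReal.ofReal_le_ofReal (Real.rpow_le_rpow (norm_nonneg _) hn (by positivity))

attribute [local instance] Matrix.linftyOpNormedRing Matrix.linftyOpNormedAlgebra

variable {S S' : Type*} [Fintype S] [DecidableEq S] [Fintype S'] [DecidableEq S']

lemma nnnorm_apply_le_linfty_opNNNorm (A : Matrix S S ℝ) (i j : S) : ‖A i j‖₊ ≤ ‖A‖₊ := by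
  rw [Matrix.linfty_opNNNorm_def]
  calc ‖A i j‖₊ ≤ ∑ j, ‖A i j‖₊ :=
        Finset.single_le_sum (f := fun j => ‖A i j‖₊) (fun _ _ => zero_le) (Finset.mem_univ j)
    _ ≤ _ := Finset.le_sup (f := fun i => ∑ j, ‖A i j‖₊) (Finset.mem_univ i)

lemma linfty_opNNNorm_le_card_mul {A : Matrix S S ℝ} {c : NNReal} (h : ∀ i j, ‖A i j‖₊ ≤ c) :
    ‖A‖₊ ≤ Fintype.card S * c := by
  rw [Matrix.linfty_opNNNorm_def]
  refine Finset.sup_le fun i _ => (Finset.sum_le_card_nsmul _ _ c fun j _ => h i j).trans ?_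
  rw [Finset.card_univ, nsmul_eq_mul]

lemma linfty_opNorm_map_ofReal_pow (A : Matrix S S ℝ) (n : ℕ) :
    ‖A.map Complex.ofReal ^ n‖ = ‖A ^ n‖ := by
  have hmap : A.map Complex.ofReal ^ n = (A ^ n).map Complex.ofReal :=
    (map_pow Complex.ofRealHom.mapMatrix A n).symm
  simp only [hmap, Matrix.linfty_opNorm_def, Matrix.map_apply, Complex.nnnorm_real]

lemma eventually_linfty_opNorm_pow_le {A : Matrix S S ℝ} {B : Matrix S' S' ℝ}
    (hA : ∀ i j, 0 ≤ A i j) {m : ℕ} (hm : ∀ i j, 0 < (A ^ m) i j) {C : ℝ} (hC : 0 ≤ C) (M : ℕ)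
    (h : ∀ᶠ n in atTop, ∃ i j k l, (A ^ n) i j ≤ C * (B ^ (n + M)) k l) :
    ∃ K > 0, ∀ᶠ n in atTop, ‖A ^ n‖ ≤ K * ‖B ^ n‖ := by
  obtain ⟨δ, hδ, hδm⟩ := exists_pos_mul_pow_apply_le hA hm
  set K : ℝ := Fintype.card S * (δ⁻¹ * (C * ‖B ^ (m + m + M)‖)) with hK
  have hK0 : 0 ≤ K := by positivity
  have hshift : Tendsto (fun n => m + n + m) atTop atTop :=
    tendsto_atTop_mono (fun n => show n ≤ m + n + m by omega) tendsto_id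
  refine ⟨K + 1, add_pos_of_nonneg_of_pos hK0 one_pos, (hshift.eventually h).mono ?_⟩
  rintro n ⟨i, j, k, l, hAB⟩
  have hB : (B ^ (m + n + m + M)) k l ≤ ‖B ^ (m + m + M)‖ * ‖B ^ n‖ :=
    calc (B ^ (m + n + m + M)) k l ≤ ‖B ^ (m + n + m + M)‖ :=
          (Real.le_norm_self _).trans (nnnorm_apply_le_linfty_opNNNorm _ k l)
      _ = ‖B ^ (m + m + M) * B ^ n‖ := by rw [← pow_add]; congr 2; omega
      _ ≤ ‖B ^ (m + m + M)‖ * ‖B ^ n‖ := norm_mul_le _ _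
  have hentry : ∀ a b, ‖(A ^ n) a b‖ ≤ δ⁻¹ * (C * (‖B ^ (m + m + M)‖ * ‖B ^ n‖)) := by
    intro a b
    rw [Real.norm_of_nonneg (Matrix.pow_apply_nonneg hA n a b), inv_mul_eq_div, le_div_iff₀' hδ]
    exact (hδm n i j a b).trans (hAB.trans (mul_le_mul_of_nonneg_left hB hC))
  calc ‖A ^ n‖ ≤ Fintype.card S * (δ⁻¹ * (C * (‖B ^ (m + m + M)‖ * ‖B ^ n‖))) :=
        linfty_opNNNorm_le_card_mul (c := ⟨_, by positivity⟩) hentry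
    _ = K * ‖B ^ n‖ := by rw [hK]; ring
    _ ≤ (K + 1) * ‖B ^ n‖ := by gcongr; exact le_add_of_nonneg_right zero_le_one

lemma spectralRadius_map_ofReal_le {A : Matrix S S ℝ} {B : Matrix S' S' ℝ}
    (hA : ∀ i j, 0 ≤ A i j) {m : ℕ} (hm : ∀ i j, 0 < (A ^ m) i j) {C : ℝ} (hC : 0 ≤ C) (M : ℕ)
    (h : ∀ᶠ n in atTop, ∃ i j k l, (A ^ n) i j ≤ C * (B ^ (n + M)) k l) :
    spectralRadius ℂ (A.map Complex.ofReal) ≤ spectralRadius ℂ (B.map Complex.ofReal) := by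
  obtain ⟨K, hK, hAB⟩ := eventually_linfty_opNorm_pow_le hA hm hC M h
  refine spectralRadius_le_of_eventually_norm_pow_le hK (hAB.mono fun n hn => ?_)
  rwa [linfty_opNorm_map_ofReal_pow, linfty_opNorm_map_ofReal_pow]

lemma betaFunction_le_of_pow_apply_le {P : Matrix S S ℝ} {Q : Matrix S' S' ℝ}
    (hP : ∀ i j, 0 ≤ P i j) (hprim : IsPrimitive P) {t C : ℝ} (hC : 0 ≤ C) (M : ℕ)
    (h : ∀ᶠ n in atTop, ∃ i j k l,
      (powerMatrix P t ^ n) i j ≤ C * (powerMatrix Q t ^ (n + M)) k l) :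
    betaFunction P t ≤ betaFunction Q t := by
  obtain ⟨m, hm⟩ := hprim
  rw [betaFunction, betaFunction, betaMatrix_eq_map_powerMatrix, betaMatrix_eq_map_powerMatrix]
  exact spectralRadius_map_ofReal_le (powerMatrix_nonneg P t)
    (fun i j => powerMatrix_pow_apply_pos hP t (hm i j)) hC M h

end SpectralRadius

/-- The points `x` of `D` such that each coordinate of `φ x` at distance `k ≥ N` from the origin is
determined by a window that reaches at most as far as the origin. -/
def controlledSet {A B : Type*} (D : Set (ℤ → A)) (φ : (ℤ → A) → (ℤ → B)) (N : ℕ) :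
    Set (ℤ → A) :=
  {x | x ∈ D ∧ ∀ m : ℤ, N ≤ m.natAbs → codeLength D φ (shiftBy m x) ≤ m.natAbs}

section Coding

variable {A B : Type*} [MeasurableSpace A] [MeasurableSpace B] {μ : Measure (ℤ → A)}
  {ν : Measure (ℤ → B)} {D : Set (ℤ → A)} {φ : (ℤ → A) → (ℤ → B)}

lemma IsFactorMap.ae_mem [IsProbabilityMeasure μ] (hφ : IsFactorMap μ ν D φ) :
    ∀ᵐ x ∂μ, x ∈ D :=
  (mem_ae_iff_prob_eq_one hφ.dom_measurable).2 hφ.dom_full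

lemma IsFactorMap.measure_preimage (hφ : IsFactorMap μ ν D φ) {Y : Set (ℤ → B)}
    (hY : MeasurableSet Y) : μ (φ ⁻¹' Y) = ν Y := by
  rw [hφ.pushforward, Measure.map_apply hφ.measurable_map hY]

lemma IsFactorMap.ae_comp (hφ : IsFactorMap μ ν D φ) {p : (ℤ → B) → Prop}
    (hp : ∀ᵐ y ∂ν, p y) : ∀ᵐ x ∂μ, p (φ x) :=
  ae_of_ae_map hφ.measurable_map.aemeasurable (hφ.pushforward ▸ hp)

lemma IsFactorMap.shiftBy_mem_iff (hφ : IsFactorMap μ ν D φ) (j : ℤ) {x : ℤ → A} :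
    shiftBy j x ∈ D ↔ x ∈ D := by
  have hshift : ∀ k : ℤ, shiftBy (1 + k) x ∈ D ↔ shiftBy k x ∈ D := fun k => by
    rw [← shiftBy_shiftBy]
    exact Set.ext_iff.1 hφ.dom_shift_invariant (shiftBy k x)
  induction j using Int.induction_on with
  | zero => rw [shiftBy_zero]
  | succ j ih => rw [add_comm]; exact (hshift j).trans ih
  | pred j ih => exact (hshift (-j - 1)).symm.trans (by rw [add_sub_cancel]; exact ih)

lemma IsFactorMap.map_shiftBy (hφ : IsFactorMap μ ν D φ) (j : ℤ) {x : ℤ → A} (hx : x ∈ D) :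
    φ (shiftBy j x) = shiftBy j (φ x) := by
  have hshift : ∀ k : ℤ, φ (shiftBy (1 + k) x) = shiftBy 1 (φ (shiftBy k x)) := fun k => by
    rw [← shiftBy_shiftBy]
    exact hφ.equivariant _ ((hφ.shiftBy_mem_iff k).2 hx)
  induction j using Int.induction_on with
  | zero => rw [shiftBy_zero, shiftBy_zero]
  | succ j ih => rw [add_comm, hshift, ih, shiftBy_shiftBy]
  | pred j ih =>
    have h := congrArg (shiftBy (-1)) (hshift (-j - 1))
    rw [add_sub_cancel, ih, shiftBy_shiftBy, shiftBy_shiftBy, neg_add_cancel, shiftBy_zero] at h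
    rw [← h, neg_add_eq_sub]

lemma IsFactorMap.apply_eq_of_mem_controlledSet (hφ : IsFactorMap μ ν D φ) {N : ℕ} {a m : ℤ}
    {x z : ℤ → A} (hx : shiftBy a x ∈ controlledSet D φ N) (hz : z ∈ D)
    (hm : N ≤ (m - a).natAbs) (hzx : ∀ i : ℤ, (i - m).natAbs ≤ (m - a).natAbs → z i = x i) :
    φ z m = φ x m := by
  have happly : ∀ w ∈ D, φ w m = φ (shiftBy m w) 0 := fun w hw => by
    simp only [hφ.map_shiftBy m hw, shiftBy, zero_add]
  have hcode : codeLength D φ (shiftBy m x) < ((m - a).natAbs + 1 : ℕ) := by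
    have := hx.2 (m - a) hm
    rw [shiftBy_shiftBy, sub_add_cancel] at this
    exact this.trans_lt (by exact_mod_cast Nat.lt_succ_self _)
  simp only [codeLength, iInf_lt_iff] at hcode
  obtain ⟨q, r, hdet, hlt⟩ := hcode
  have hqr : q + r < (m - a).natAbs + 1 := by exact_mod_cast hlt
  rw [happly z hz, happly x ((hφ.shiftBy_mem_iff a).1 hx.1)]
  exact hdet _ ((hφ.shiftBy_mem_iff m).2 hz) fun i _ _ => hzx _ (by omega)

lemma IsFactorMap.eqOn_compl_Ioo_of_mem_controlledSet (hφ : IsFactorMap μ ν D φ) {N n : ℕ}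
    {x z : ℤ → A} (hx₀ : x ∈ controlledSet D φ N) (hxₙ : shiftBy n x ∈ controlledSet D φ N)
    (hz : z ∈ D) (hzx : Set.EqOn z x (Set.Ioo 0 n)ᶜ) :
    Set.EqOn (φ z) (φ x) (Set.Ioo (-N) (n + N))ᶜ := by
  intro m hm
  rcases le_or_gt m (-N) with hmN | hmN
  · exact hφ.apply_eq_of_mem_controlledSet ((shiftBy_zero x).symm ▸ hx₀) hz (by omega)
      fun i hi => hzx fun h => by have := h.1; omega
  · have hnm : n + N ≤ m := not_lt.1 fun h => hm ⟨hmN, h⟩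
    exact hφ.apply_eq_of_mem_controlledSet hxₙ hz (by omega)
      fun i hi => hzx fun h => by have := h.2; omega

lemma IsFactorMap.map_mem_cyl_of_mem_controlledSet (hφ : IsFactorMap μ ν D φ) {N n : ℕ}
    {x z : ℤ → A} (hx₀ : x ∈ controlledSet D φ N) (hxₙ : shiftBy n x ∈ controlledSet D φ N)
    (hz : z ∈ D) (hzx : z ∈ cyl 0 n x) : φ z ∈ cyl N (n - N) (φ x) := by
  rintro m ⟨hm₀, hmₙ⟩
  rcases le_total (2 * m) n with hmn | hmn
  · exact hφ.apply_eq_of_mem_controlledSet ((shiftBy_zero x).symm ▸ hx₀) hz (by omega)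
      fun i hi => hzx ⟨by omega, by omega⟩
  · exact hφ.apply_eq_of_mem_controlledSet hxₙ hz (by omega)
      fun i hi => hzx ⟨by omega, by omega⟩

variable [Finite A] [DiscreteMeasurableSpace A] [Finite B] [DiscreteMeasurableSpace B]

lemma measurableSet_determinesAt (hφ : Measurable φ) (q r : ℕ) :
    MeasurableSet {x | DeterminesAt D φ q r x} := by
  let g : (ℤ → A) → (Finset.Icc (-q : ℤ) r → A) × B := fun x =>
    ((Finset.Icc (-q : ℤ) r).restrict x, φ x 0)
  have hg : Measurable g :=
    (Finset.measurable_restrict _).prodMk ((measurable_pi_apply 0).comp hφ)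
  have hsat : {x | DeterminesAt D φ q r x} = g ⁻¹' (g '' {x | DeterminesAt D φ q r x}) := by
    refine (Set.subset_preimage_image g _).antisymm ?_
    rintro x ⟨w, hw, hwx⟩ y hy hyx
    obtain ⟨hwindow, hvalue⟩ := Prod.ext_iff.1 hwx
    refine (hw y hy fun i hq hr => (hyx i hq hr).trans ?_).trans hvalue
    exact (congrFun hwindow ⟨i, Finset.mem_Icc.2 ⟨hq, hr⟩⟩).symm
  rw [hsat]
  exact hg .of_discrete

lemma measurable_codeLength (hφ : Measurable φ) : Measurable (codeLength D φ) := by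
  classical
  unfold codeLength
  simp only [iInf_eq_if]
  exact .iInf fun q => .iInf fun r =>
    .ite (measurableSet_determinesAt hφ q r) measurable_const measurable_const

lemma tsum_measure_natCast_lt_ne_top {Ω : Type*} [MeasurableSpace Ω] {μ : Measure Ω}
    [IsProbabilityMeasure μ] {f : Ω → ℝ≥0∞} (hf : Measurable f) (hfin : ∫⁻ x, f x ∂μ ≠ ⊤) :
    ∑' k : ℕ, μ {x | k < f x} ≠ ⊤ := by
  let _ : MeasureSpace Ω := ⟨μ⟩
  refine ne_top_of_le_ne_top (ProbabilityTheory.tsum_prob_mem_Ioi_lt_top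
    (integrable_toReal_of_lintegral_ne_top hf.aemeasurable hfin)
    fun _ => ENNReal.toReal_nonneg).ne (ENNReal.tsum_le_tsum fun k => measure_mono_ae ?_)
  filter_upwards [ae_lt_top hf hfin] with x hx hk
  exact (ENNReal.lt_ofReal_iff_toReal_lt (ENNReal.natCast_ne_top k)).1
    (hk.trans_eq (ENNReal.ofReal_toReal hx.ne).symm)

lemma IsFactorMap.measurableSet_controlledSet (hφ : IsFactorMap μ ν D φ) (N : ℕ) :
    MeasurableSet (controlledSet D φ N) := by
  have hcode := measurable_codeLength (D := D) hφ.measurable_map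
  have heq : controlledSet D φ N =
      D ∩ ⋂ (m : ℤ) (_ : N ≤ m.natAbs), {x | codeLength D φ (shiftBy m x) ≤ m.natAbs} := by
    ext x
    simp [controlledSet]
  rw [heq]
  refine hφ.dom_measurable.inter (.iInter fun m => .iInter fun _ => ?_)
  exact measurableSet_le (hcode.comp (measurable_shiftBy m)) measurable_const

variable [IsProbabilityMeasure μ]

lemma IsFactorMap.ae_exists_mem_controlledSet (hφ : IsFactorMap μ ν D φ)
    (hμ : ∀ j, MeasurePreserving (shiftBy j) μ μ) (hfin : ∫⁻ x, codeLength D φ x ∂μ ≠ ⊤) :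
    ∀ᵐ x ∂μ, ∃ N, x ∈ controlledSet D φ N := by
  have hcode := measurable_codeLength (D := D) hφ.measurable_map
  have hsum : ∑' m : ℤ, μ {x | m.natAbs < codeLength D φ (shiftBy m x)} ≠ ⊤ := by
    have hshift : ∀ m : ℤ, μ {x | m.natAbs < codeLength D φ (shiftBy m x)} =
        μ {x | m.natAbs < codeLength D φ x} := fun m =>
      (hμ m).measure_preimage (measurableSet_lt measurable_const hcode).nullMeasurableSet
    have hnat := tsum_measure_natCast_lt_ne_top hcode hfin
    simp only [hshift]
    rw [tsum_of_nat_of_neg_add_one ENNReal.summable ENNReal.summable]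
    simp only [← Nat.cast_succ, Int.natAbs_neg, Int.natAbs_natCast]
    exact ENNReal.add_ne_top.2 ⟨hnat, ne_top_of_le_ne_top hnat
      (ENNReal.tsum_comp_le_tsum_of_injective Nat.succ_injective _)⟩
  filter_upwards [hφ.ae_mem, ae_finite_setOfPred_mem hsum] with x hxD hx
  obtain ⟨N, hN⟩ := (hx.image Int.natAbs).bddAbove
  refine ⟨N + 1, hxD, fun m hm => le_of_not_gt fun hlt => ?_⟩
  have := hN ⟨m, hlt, rfl⟩
  omega

lemma IsFactorMap.exists_frequently_mem_controlledSet (hφ : IsFactorMap μ ν D φ)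
    (hμ : ∀ j, MeasurePreserving (shiftBy j) μ μ) (hfin : ∫⁻ x, codeLength D φ x ∂μ ≠ ⊤) :
    ∃ N, ∀ j, ∃ᵐ x ∂μ, x ∈ controlledSet D φ N ∧ shiftBy j x ∈ controlledSet D φ N := by
  have hmono : Monotone (controlledSet D φ) := fun N N' hNN' x hx =>
    ⟨hx.1, fun m hm => hx.2 m (hNN'.trans hm)⟩
  have hsup : ⨆ N, μ (controlledSet D φ N) = 1 := by
    rw [← hmono.measure_iUnion,
      ← mem_ae_iff_prob_eq_one (.iUnion fun N => hφ.measurableSet_controlledSet N)]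
    filter_upwards [hφ.ae_exists_mem_controlledSet hμ hfin] with x hx using Set.mem_iUnion.2 hx
  obtain ⟨N, hN⟩ := lt_iSup_iff.1 (hsup ▸ ENNReal.one_half_lt_one)
  refine ⟨N, fun j hnull => ?_⟩
  have hshift := (hμ j).measure_preimage (hφ.measurableSet_controlledSet N).nullMeasurableSet
  have hinter : μ (controlledSet D φ N ∩ shiftBy j ⁻¹' controlledSet D φ N) = 0 :=
    measure_eq_zero_iff_ae_notMem.2 hnull
  have hunion := measure_union_add_inter (μ := μ) (controlledSet D φ N)
    (measurable_shiftBy j (hφ.measurableSet_controlledSet N))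
  rw [hinter, add_zero, hshift] at hunion
  refine (hunion ▸ prob_le_one).not_gt ?_
  exact ENNReal.inv_two_add_inv_two.symm.trans_lt (ENNReal.add_lt_add hN hN)

end Coding

/-- The path of `n` steps that `x` follows from position `a` on. -/
def pathOf {S : Type*} (a : ℤ) (n : ℕ) (x : ℤ → S) : Fin (n + 1) → S := fun k => x (a + k)

/-- The sequence obtained from `x` by writing the path `p` on the window `[0, n]`. -/
def extendPath {S : Type*} {n : ℕ} (p : Fin (n + 1) → S) (x : ℤ → S) : ℤ → S := fun i =>
  if h : i ∈ Set.Icc (0 : ℤ) n then p ⟨i.toNat, Nat.lt_succ_of_le (Int.toNat_le.2 h.2)⟩ else x i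

/-- The sequences that have positive weight along `[a, b]` and differ from `x` at most strictly
inside that window. -/
def perturbations {S : Type*} (P : Matrix S S ℝ) (a b : ℤ) (x : ℤ → S) : Set (ℤ → S) :=
  {z | Set.EqOn z x (Set.Ioo a b)ᶜ ∧ 0 < pathWeight P a b z}

section PathCoding

variable {S S' : Type*} {P : Matrix S S ℝ} {Q : Matrix S' S' ℝ} {n : ℕ}

lemma finPathWeight_pathOf (P : Matrix S S ℝ) (a : ℤ) (n : ℕ) (x : ℤ → S) :
    finPathWeight P (pathOf a n x) = pathWeight P a (a + n) x := by
  refine Finset.prod_bij (fun (k : Fin n) _ => a + (k : ℤ)) ?_ ?_ ?_ ?_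
  · intro k _
    exact Finset.mem_Ico.2 ⟨by omega, by omega⟩
  · intro k _ l _ h
    ext
    omega
  · intro i hi
    rw [Finset.mem_Ico] at hi
    exact ⟨⟨(i - a).toNat, by omega⟩, Finset.mem_univ _, by simp only; omega⟩
  · intro k _
    simp [pathOf, add_assoc]

lemma pathOf_extendPath (p : Fin (n + 1) → S) (x : ℤ → S) : pathOf 0 n (extendPath p x) = p := by
  funext k
  have hk : (k : ℤ) ∈ Set.Icc (0 : ℤ) n := ⟨by omega, by omega⟩
  simp only [pathOf, extendPath, zero_add, dif_pos hk, Int.toNat_natCast]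

lemma pathWeight_extendPath (P : Matrix S S ℝ) (p : Fin (n + 1) → S) (x : ℤ → S) :
    pathWeight P 0 n (extendPath p x) = finPathWeight P p := by
  rw [← zero_add (n : ℤ), ← finPathWeight_pathOf, pathOf_extendPath]

lemma eqOn_extendPath {p : Fin (n + 1) → S} {x : ℤ → S} (h₀ : p 0 = x 0)
    (hₙ : p (Fin.last n) = x n) : Set.EqOn (extendPath p x) x (Set.Ioo 0 n)ᶜ := by
  intro i hi
  unfold extendPath
  split_ifs with h
  · rcases h.1.eq_or_lt with rfl | hpos
    · exact h₀
    · obtain rfl : i = n := le_antisymm h.2 (not_lt.1 fun hlt => hi ⟨hpos, hlt⟩)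
      exact hₙ
  · rfl

lemma eq_of_pathOf_eq {a : ℤ} {y z : ℤ → S} (hpath : pathOf a n y = pathOf a n z)
    (hcompl : Set.EqOn y z (Set.Ioo a (a + n))ᶜ) : y = z := by
  funext i
  by_cases hi : i ∈ Set.Ioo a (a + n)
  · have := congrFun hpath ⟨(i - a).toNat, by have := hi.1; have := hi.2; omega⟩
    simpa only [pathOf, Int.toNat_of_nonneg (sub_nonneg.2 hi.1.le), add_sub_cancel] using this
  · exact hcompl hi

variable [Fintype S]

lemma extendPath_mem_perturbations {x : ℤ → S} {p : Fin (n + 1) → S}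
    (hp : p ∈ positivePaths P n (x 0) (x n)) : extendPath p x ∈ perturbations P 0 n x := by
  obtain ⟨h₀, hₙ, hpos⟩ := mem_positivePaths.1 hp
  exact ⟨eqOn_extendPath h₀ hₙ, (pathWeight_extendPath P p x).symm ▸ hpos⟩

variable [DecidableEq S] [Fintype S'] [DecidableEq S']

lemma powerMatrix_pow_apply_le_of_injOn_perturbations (hP : ∀ i j, 0 ≤ P i j)
    (hQ : ∀ i j, 0 ≤ Q i j) {f : (ℤ → S) → (ℤ → S')} {x : ℤ → S} {m : ℕ} {a b : ℤ}
    (hb : a + m = b) {K : ℝ} (hK : 0 ≤ K) (hinj : Set.InjOn f (perturbations P 0 n x))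
    (heq : ∀ z ∈ perturbations P 0 n x, Set.EqOn (f z) (f x) (Set.Ioo a b)ᶜ)
    (hweight : ∀ z ∈ perturbations P 0 n x, pathWeight P 0 n z = K * pathWeight Q a b (f z))
    (t : ℝ) :
    (powerMatrix P t ^ n) (x 0) (x n) ≤ K ^ t * (powerMatrix Q t ^ m) (f x a) (f x b) := by
  subst hb
  have hw : ∀ p ∈ positivePaths P n (x 0) (x n),
      finPathWeight P p = K * finPathWeight Q (pathOf a m (f (extendPath p x))) := fun p hp => by
    rw [finPathWeight_pathOf, ← hweight _ (extendPath_mem_perturbations hp), pathWeight_extendPath]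
  refine powerMatrix_pow_apply_le_of_coding hP hQ hK
    (fun p => pathOf a m (f (extendPath p x))) (fun p hp => ?_) (fun p hp q hq hpq => ?_) hw t
  · have hfx := heq _ (extendPath_mem_perturbations hp)
    have hpos := (mem_positivePaths.1 hp).2.2
    rw [hw p hp] at hpos
    refine mem_positivePaths.2 ⟨?_, hfx fun h => h.2.false, pos_of_mul_pos_right hpos hK⟩
    simpa only [pathOf, Fin.val_zero, Nat.cast_zero, add_zero] using hfx fun h => h.1.false
  · have hp' := extendPath_mem_perturbations hp
    have hq' := extendPath_mem_perturbations hq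
    have hext : extendPath p x = extendPath q x := hinj hp' hq'
      (eq_of_pathOf_eq hpq ((heq _ hp').trans (heq _ hq').symm))
    rw [← pathOf_extendPath p x, hext, pathOf_extendPath]

end PathCoding

/-- A measure-theoretic isomorphism of two shift systems, given by mutually inverse factor maps
`φ` and `ψ` with domains `D` and `E`. -/
structure IsShiftIsomorphism {A B : Type*} [MeasurableSpace A] [MeasurableSpace B]
    (μ : Measure (ℤ → A)) (ν : Measure (ℤ → B)) (D : Set (ℤ → A)) (E : Set (ℤ → B))
    (φ : (ℤ → A) → (ℤ → B)) (ψ : (ℤ → B) → (ℤ → A)) : Prop where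
  factor : IsFactorMap μ ν D φ
  factor_inv : IsFactorMap ν μ E ψ
  mapsTo : Set.MapsTo φ D E
  mapsTo_inv : Set.MapsTo ψ E D
  leftInvOn : Set.LeftInvOn ψ φ D
  rightInvOn : Set.RightInvOn ψ φ E

section Isomorphism

variable {A B : Type*} [MeasurableSpace A] [MeasurableSpace B] {μ : Measure (ℤ → A)}
  {ν : Measure (ℤ → B)} {D : Set (ℤ → A)} {E : Set (ℤ → B)} {φ : (ℤ → A) → (ℤ → B)}
  {ψ : (ℤ → B) → (ℤ → A)}

lemma IsFinitaryIsomorphism.isShiftIsomorphism (h : IsFinitaryIsomorphism μ ν D E φ ψ) :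
    IsShiftIsomorphism μ ν D E φ ψ := by
  obtain ⟨hφ, hψ, -, -, hD, hE⟩ := h
  exact ⟨hφ, hψ, fun x hx => (hD x hx).1, fun y hy => (hE y hy).1, fun x hx => (hD x hx).2,
    fun y hy => (hE y hy).2⟩

namespace IsShiftIsomorphism

lemma symm (h : IsShiftIsomorphism μ ν D E φ ψ) : IsShiftIsomorphism ν μ E D ψ φ :=
  ⟨h.factor_inv, h.factor, h.mapsTo_inv, h.mapsTo, h.rightInvOn, h.leftInvOn⟩

variable {X : Set (ℤ → A)}

lemma image_eq (h : IsShiftIsomorphism μ ν D E φ ψ) (hX : X ⊆ D) : φ '' X = ψ ⁻¹' X ∩ E := by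
  ext y
  constructor
  · rintro ⟨x, hx, rfl⟩
    exact ⟨by rwa [Set.mem_preimage, h.leftInvOn (hX hx)], h.mapsTo (hX hx)⟩
  · rintro ⟨hyX, hyE⟩
    exact ⟨ψ y, hyX, h.rightInvOn hyE⟩

lemma measurableSet_image (h : IsShiftIsomorphism μ ν D E φ ψ) (hX : MeasurableSet X)
    (hXD : X ⊆ D) : MeasurableSet (φ '' X) := by
  rw [h.image_eq hXD]
  exact (h.factor_inv.measurable_map hX).inter h.factor_inv.dom_measurable

lemma measure_image [IsProbabilityMeasure ν] (h : IsShiftIsomorphism μ ν D E φ ψ)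
    (hX : MeasurableSet X) (hXD : X ⊆ D) : ν (φ '' X) = μ X := by
  rw [h.image_eq hXD, Set.inter_comm, Measure.measure_inter_eq_of_ae h.factor_inv.ae_mem,
    h.factor_inv.measure_preimage hX]

end IsShiftIsomorphism

end Isomorphism

section WeightCocycle

variable {S S' : Type*} [Fintype S] [Fintype S'] [MeasurableSpace S] [DiscreteMeasurableSpace S]
  [MeasurableSpace S'] [DiscreteMeasurableSpace S'] {P : Matrix S S ℝ} {Q : Matrix S' S' ℝ}
  {ppi : S → ℝ} {qpi : S' → ℝ} {μ : Measure (ℤ → S)} {ν : Measure (ℤ → S')}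
  [IsProbabilityMeasure μ] [IsProbabilityMeasure ν] {D : Set (ℤ → S)} {E : Set (ℤ → S')}
  {φ : (ℤ → S) → (ℤ → S')} {ψ : (ℤ → S') → (ℤ → S)} {a b a' b' : ℤ}

namespace IsShiftIsomorphism

lemma pathWeight_mul_eq_of_splice_comm (h : IsShiftIsomorphism μ ν D E φ ψ)
    (hμ : IsMarkovMeasure μ P ppi) (hν : IsMarkovMeasure ν Q qpi) (hP : ∀ i j, 0 ≤ P i j)
    (hQ : ∀ i j, 0 ≤ Q i j) (hab : a ≤ b) (hab' : a' ≤ b') {u w : ℤ → S} {u' w' : ℤ → S'}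
    (ha : u a = w a) (hb : u b = w b) (ha' : u' a' = w' a') (hb' : u' b' = w' b')
    {X : Set (ℤ → S)} (hX : MeasurableSet X) (hX0 : μ X ≠ 0) (hXD : X ⊆ D)
    (hXw : X ⊆ cyl a b w) (hφX : Set.MapsTo φ X (cyl a' b' w'))
    (hsplice : Set.MapsTo (splice a b u) X D)
    (hcomm : ∀ x ∈ X, φ (splice a b u x) = splice a' b' u' (φ x)) :
    pathWeight Q a' b' u' * pathWeight P a b w = pathWeight P a b u * pathWeight Q a' b' w' := by
  have himage : splice a' b' u' '' (φ '' X) = φ '' (splice a b u '' X) := by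
    rw [Set.image_image, Set.image_image]
    exact (Set.image_congr hcomm).symm
  have hXu : MeasurableSet (splice a b u '' X) := by
    rw [image_splice hXw]
    exact (measurable_splice a b w hX).inter (measurableSet_cyl a b u)
  have hPX := hμ.measure_image_splice hP hab ha hb hX hXw
  have hQX := hν.measure_image_splice hQ hab' ha' hb' (h.measurableSet_image hX hXD)
    (Set.image_subset_iff.2 hφX)
  rw [himage, h.measure_image hXu (Set.image_subset_iff.2 hsplice), h.measure_image hX hXD] at hQX
  have hmul : ENNReal.ofReal (pathWeight Q a' b' u' * pathWeight P a b w) * μ X =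
      ENNReal.ofReal (pathWeight P a b u * pathWeight Q a' b' w') * μ X := by
    rw [ENNReal.ofReal_mul (pathWeight_nonneg hQ _ _ _),
      ENNReal.ofReal_mul (pathWeight_nonneg hP _ _ _), mul_right_comm, ← hQX, mul_right_comm,
      mul_assoc, hPX, mul_left_comm, mul_assoc]
  exact (ENNReal.ofReal_eq_ofReal_iff
    (mul_nonneg (pathWeight_nonneg hQ _ _ _) (pathWeight_nonneg hP _ _ _))
    (mul_nonneg (pathWeight_nonneg hP _ _ _) (pathWeight_nonneg hQ _ _ _))).1
    ((ENNReal.mul_left_inj hX0 (measure_ne_top μ X)).1 hmul)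

lemma ae_pathWeight_splice_mul_eq (h : IsShiftIsomorphism μ ν D E φ ψ)
    (hμ : IsMarkovMeasure μ P ppi) (hν : IsMarkovMeasure ν Q qpi) (hP : ∀ i j, 0 ≤ P i j)
    (hQ : ∀ i j, 0 ≤ Q i j) (hab : a ≤ b) (hab' : a' ≤ b') (u : ℤ → S) :
    ∀ᵐ x ∂μ, u a = x a → u b = x b → splice a b u x ∈ D →
      Set.EqOn (φ (splice a b u x)) (φ x) (Set.Ioo a' b')ᶜ →
      pathWeight Q a' b' (φ (splice a b u x)) * pathWeight P a b x =
        pathWeight P a b u * pathWeight Q a' b' (φ x) := by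
  refine ae_of_forall_cyl (fun x => x) a b fun w => ae_of_forall_cyl φ a' b' fun w' =>
    ae_of_forall_cyl (fun x => φ (splice a b u x)) a' b' fun u' => ?_
  let X : Set (ℤ → S) := D ∩ splice a b u ⁻¹' D ∩ cyl a b w ∩ φ ⁻¹' cyl a' b' w' ∩
    {x | φ (splice a b u x) = splice a' b' u' (φ x)}
  have hX : MeasurableSet X :=
    (((h.factor.dom_measurable.inter (measurable_splice a b u h.factor.dom_measurable)).inter
      (measurableSet_cyl a b w)).inter (h.factor.measurable_map (measurableSet_cyl a' b' w'))).inter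
      (measurableSet_eq_fun (h.factor.measurable_map.comp (measurable_splice a b u))
        ((measurable_splice a' b' u').comp h.factor.measurable_map))
  by_cases hX0 : μ X = 0
  · filter_upwards [h.factor.ae_mem, measure_eq_zero_iff_ae_notMem.1 hX0]
      with x hxD hxX hu' hw' hw _ _ hD heq
    refine (hxX ⟨⟨⟨⟨hxD, hD⟩, hw⟩, hw'⟩, ?_⟩).elim
    rw [Set.mem_ofPred_eq, ← splice_congr hu', splice_eq_of_eqOn_compl heq]
  · refine .of_forall fun x hu' hw' hw ha hb _ heq => ?_
    have hends {i : ℤ} (hi : i ∈ Set.Icc a' b') (hi' : i ∉ Set.Ioo a' b') : u' i = w' i :=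
      (hu' hi).symm.trans ((heq hi').trans (hw' hi))
    rw [pathWeight_congr hu', pathWeight_congr hw', pathWeight_congr hw]
    exact h.pathWeight_mul_eq_of_splice_comm hμ hν hP hQ hab hab'
      (ha.trans (hw ⟨le_rfl, hab⟩)) (hb.trans (hw ⟨hab, le_rfl⟩))
      (hends ⟨le_rfl, hab'⟩ fun h => h.1.false) (hends ⟨hab', le_rfl⟩ fun h => h.2.false)
      hX hX0 (fun x hx => hx.1.1.1.1) (fun x hx => hx.1.1.2) (fun x hx => hx.1.2)
      (fun x hx => hx.1.1.1.2) fun x hx => hx.2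

lemma ae_forall_perturbations (h : IsShiftIsomorphism μ ν D E φ ψ)
    (hμ : IsMarkovMeasure μ P ppi) (hν : IsMarkovMeasure ν Q qpi) (hP : ∀ i j, 0 ≤ P i j)
    (hQ : ∀ i j, 0 ≤ Q i j) (hab : a ≤ b) (hab' : a' ≤ b') :
    ∀ᵐ x ∂μ, ∀ z ∈ perturbations P a b x, z ∈ D ∧
      (Set.EqOn (φ z) (φ x) (Set.Ioo a' b')ᶜ →
        pathWeight Q a' b' (φ z) * pathWeight P a b x =
          pathWeight P a b z * pathWeight Q a' b' (φ x)) := by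
  have hsplice : ∀ᵐ x ∂μ, ∀ u, splice a b u x ∈ perturbations P a b x →
      splice a b u x ∈ D ∧ (Set.EqOn (φ (splice a b u x)) (φ x) (Set.Ioo a' b')ᶜ →
        pathWeight Q a' b' (φ (splice a b u x)) * pathWeight P a b x =
          pathWeight P a b (splice a b u x) * pathWeight Q a' b' (φ x)) := by
    refine ae_forall_splice a b (p := fun z x => z ∈ perturbations P a b x → z ∈ D ∧
      (Set.EqOn (φ z) (φ x) (Set.Ioo a' b')ᶜ → pathWeight Q a' b' (φ z) * pathWeight P a b x =
        pathWeight P a b z * pathWeight Q a' b' (φ x))) fun u => ?_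
    simp only [perturbations, Set.mem_ofPred_eq, pathWeight_congr (splice_mem_cyl a b u _)]
    by_cases hu : 0 < pathWeight P a b u
    · filter_upwards [hμ.ae_splice hP h.factor.ae_mem hab u hu,
        h.ae_pathWeight_splice_mul_eq hμ hν hP hQ hab hab' u] with x hD hweight ⟨heq, _⟩
      have hends {i : ℤ} (hi : i ∈ Set.Icc a b) (hi' : i ∉ Set.Ioo a b) : u i = x i :=
        (splice_apply_of_mem hi).symm.trans (heq hi')
      have ha := hends ⟨le_rfl, hab⟩ fun h => h.1.false
      have hb := hends ⟨hab, le_rfl⟩ fun h => h.2.false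
      exact ⟨hD ha hb, hweight ha hb (hD ha hb)⟩
    · exact .of_forall fun x hx => absurd hx.2 hu
  filter_upwards [hsplice] with x hx z hz
  have hxz := hx z
  rw [splice_eq_of_eqOn_compl hz.1] at hxz
  exact hxz hz

variable [DecidableEq S] [DecidableEq S']

lemma ae_powerMatrix_pow_apply_le (h : IsShiftIsomorphism μ ν D E φ ψ)
    (hμ : IsMarkovMeasure μ P ppi) (hν : IsMarkovMeasure ν Q qpi) (hP : ∀ i j, 0 ≤ P i j)
    (hQ : ∀ i j, 0 ≤ Q i j) (n N : ℕ) :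
    ∀ᵐ x ∂μ, x ∈ controlledSet D φ N → shiftBy n x ∈ controlledSet D φ N →
      0 < pathWeight P 0 n x → 0 < pathWeight Q (-N) (n + N) (φ x) → ∀ t : ℝ,
      (powerMatrix P t ^ n) (x 0) (x n) ≤
        (pathWeight P 0 n x / pathWeight Q (-N) (n + N) (φ x)) ^ t *
          (powerMatrix Q t ^ (n + 2 * N)) (φ x (-N)) (φ x (n + N)) := by
  filter_upwards [h.ae_forall_perturbations hμ hν hP hQ (a := 0) (b := n) (a' := -N) (b' := n + N)
    (by omega) (by omega)] with x hx hx₀ hxₙ hposP hposQ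
  have heq : ∀ z ∈ perturbations P 0 n x, Set.EqOn (φ z) (φ x) (Set.Ioo (-N) (n + N))ᶜ :=
    fun z hz => h.factor.eqOn_compl_Ioo_of_mem_controlledSet hx₀ hxₙ (hx z hz).1 hz.1
  refine powerMatrix_pow_apply_le_of_injOn_perturbations hP hQ (by push_cast; ring)
    (div_pos hposP hposQ).le (h.leftInvOn.injOn.mono fun z hz => (hx z hz).1) heq fun z hz => ?_
  rw [div_mul_eq_mul_div, eq_div_iff hposQ.ne', ← (hx z hz).2 (heq z hz), mul_comm]

end IsShiftIsomorphism

end WeightCocycle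

section Comparison

lemma rpow_le_rpow_add_rpow {a b K : ℝ} (ha : 0 < a) (haK : a ≤ K) (hKb : K ≤ b) (t : ℝ) :
    K ^ t ≤ a ^ t + b ^ t := by
  have hK : 0 < K := ha.trans_le haK
  rcases le_total 0 t with ht | ht
  · exact (Real.rpow_le_rpow hK.le hKb ht).trans (le_add_of_nonneg_left (Real.rpow_nonneg ha.le t))
  · exact (Real.rpow_le_rpow_of_nonpos ha haK ht).trans
      (le_add_of_nonneg_right (Real.rpow_nonneg (hK.le.trans hKb) t))

variable {S S' : Type*} [Fintype S] [Fintype S'] {P : Matrix S S ℝ} {Q : Matrix S' S' ℝ}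

lemma le_of_pow_apply_le_mul [DecidableEq S] [DecidableEq S'] (hP : ∀ i j, 0 ≤ P i j)
    (hQ : IsStochastic Q) {c K : ℝ} {n m : ℕ} {i j : S} {k l : S'} (hc : c ≤ (P ^ n) i j)
    (hK : 0 ≤ K)
    (h : (powerMatrix P 1 ^ n) i j ≤ K ^ (1 : ℝ) * (powerMatrix Q 1 ^ m) k l) : c ≤ K := by
  rw [powerMatrix_one hP, powerMatrix_one hQ.1, Real.rpow_one] at h
  calc c ≤ (P ^ n) i j := hc
    _ ≤ K * (Q ^ m) k l := h
    _ ≤ K := mul_le_of_le_one_right hK (hQ.pow_apply_le_one m k l)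

variable [MeasurableSpace S] [MeasurableSpace S'] [DiscreteMeasurableSpace S'] {ppi : S → ℝ}
  {qpi : S' → ℝ} {μ : Measure (ℤ → S)} {ν : Measure (ℤ → S')} {D : Set (ℤ → S)}
  {E : Set (ℤ → S')} {φ : (ℤ → S) → (ℤ → S')}
  {ψ : (ℤ → S') → (ℤ → S)} {n N : ℕ} {x : ℤ → S}

lemma IsFactorMap.mul_pathWeight_le_of_mem_controlledSet [IsProbabilityMeasure μ]
    (hφ : IsFactorMap μ ν D φ) (hμ : IsMarkovMeasure μ P ppi) (hν : IsMarkovMeasure ν Q qpi)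
    (hQ : ∀ i j, 0 ≤ Q i j) (hqpi : ∀ i, 0 ≤ qpi i) (hn : 2 * N ≤ n)
    (hx₀ : x ∈ controlledSet D φ N) (hxₙ : shiftBy n x ∈ controlledSet D φ N) :
    ppi (x 0) * pathWeight P 0 n x ≤ qpi (φ x N) * pathWeight Q N (n - N) (φ x) := by
  have hcyl : μ (cyl 0 n x) ≤ ν (cyl N (n - N) (φ x)) := by
    rw [← hφ.measure_preimage (measurableSet_cyl _ _ _)]
    refine measure_mono_ae ?_
    filter_upwards [hφ.ae_mem] with z hz hzx
      using hφ.map_mem_cyl_of_mem_controlledSet hx₀ hxₙ hz hzx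
  rwa [hμ.measure_cyl (by omega), hν.measure_cyl (by omega), ENNReal.ofReal_le_ofReal_iff
    (mul_nonneg (hqpi _) (pathWeight_nonneg hQ _ _ _))] at hcyl

lemma IsFactorMap.pathWeight_div_le_of_mem_controlledSet [IsProbabilityMeasure μ]
    (hφ : IsFactorMap μ ν D φ) (hμ : IsMarkovMeasure μ P ppi) (hν : IsMarkovMeasure ν Q qpi)
    (hP : ∀ i j, 0 ≤ P i j) (hQ : ∀ i j, 0 ≤ Q i j) (hqpi : IsStationaryVector Q qpi)
    (hn : 2 * N ≤ n) (hx₀ : x ∈ controlledSet D φ N) (hxₙ : shiftBy n x ∈ controlledSet D φ N)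
    {ρ δ : ℝ} (hρ0 : 0 < ρ) (hρ : ρ ≤ ppi (x 0)) (hδ0 : 0 < δ) (hδ : ∀ i j, 0 < Q i j → δ ≤ Q i j)
    (hpos : 0 < pathWeight Q (-N) (n + N) (φ x)) :
    pathWeight P 0 n x / pathWeight Q (-N) (n + N) (φ x) ≤ (δ ^ (4 * N) * ρ)⁻¹ := by
  have hqpi_le : qpi (φ x N) ≤ 1 :=
    (Finset.single_le_sum (fun i _ => hqpi.1 i) (Finset.mem_univ _)).trans_eq hqpi.2.1
  have hleft : (N : ℤ) - (2 * N : ℕ) = -N := by push_cast; ring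
  have hright : (n : ℤ) - N + (2 * N : ℕ) = n + N := by push_cast; ring
  have hwiden := pow_mul_pathWeight_le (a := N) (b := n - N) (x := φ x) hQ hδ0.le hδ (2 * N) (2 * N)
    (by omega) (by rwa [hleft, hright])
  rw [hleft, hright, ← add_mul] at hwiden
  rw [div_le_iff₀ hpos, le_inv_mul_iff₀ (by positivity)]
  calc δ ^ (4 * N) * ρ * pathWeight P 0 n x
      = δ ^ (4 * N) * (ρ * pathWeight P 0 n x) := mul_assoc _ _ _
    _ ≤ δ ^ (4 * N) * (ppi (x 0) * pathWeight P 0 n x) := by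
        gcongr
        exact pathWeight_nonneg hP _ _ _
    _ ≤ δ ^ (4 * N) * (qpi (φ x N) * pathWeight Q N (n - N) (φ x)) :=
        mul_le_mul_of_nonneg_left
          (hφ.mul_pathWeight_le_of_mem_controlledSet hμ hν hQ hqpi.1 hn hx₀ hxₙ) (by positivity)
    _ ≤ δ ^ (4 * N) * pathWeight Q N (n - N) (φ x) := by
        gcongr
        exact mul_le_of_le_one_left (pathWeight_nonneg hQ _ _ _) hqpi_le
    _ ≤ pathWeight Q (-N) (n + N) (φ x) := hwiden

theorem IsShiftIsomorphism.betaFunction_le [DiscreteMeasurableSpace S] [DecidableEq S]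
    [DecidableEq S'] (h : IsShiftIsomorphism μ ν D E φ ψ)
    (hP : IsStochastic P) (hPprim : IsPrimitive P)
    (hppi : IsStationaryVector P ppi) (hμ : IsMarkovMeasure μ P ppi) (hQ : IsStochastic Q)
    (hqpi : IsStationaryVector Q qpi) (hν : IsMarkovMeasure ν Q qpi)
    (hfin : ∫⁻ x, codeLength D φ x ∂μ ≠ ⊤) (t : ℝ) : betaFunction P t ≤ betaFunction Q t := by
  have := hμ.isProbabilityMeasure hppi
  have := hν.isProbabilityMeasure hqpi
  obtain ⟨N, hN⟩ := h.factor.exists_frequently_mem_controlledSet hμ.measurePreserving_shiftBy hfin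
  obtain ⟨c, hc0, hc⟩ := hPprim.exists_forall_le_pow_apply hP
  obtain ⟨ρ, hρ0, hρ⟩ := exists_pos_le_of_pos ppi
  obtain ⟨δ, hδ0, hδ⟩ := exists_pos_le_of_pos fun ij : S' × S' => Q ij.1 ij.2
  have hC : 0 ≤ c ^ t + (δ ^ (4 * N) * ρ)⁻¹ ^ t := by positivity
  refine betaFunction_le_of_pow_apply_le hP.1 hPprim hC (2 * N) ?_
  filter_upwards [hc, eventually_ge_atTop (2 * N)] with n hcn hn
  have hcompare := h.ae_powerMatrix_pow_apply_le hμ hν hP.1 hQ.1 n N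
  have hposP := hμ.ae_pathWeight_pos hP.1 hppi.1 (a := 0) (b := n) (by omega)
  have hposQ := h.factor.ae_comp
    (hν.ae_pathWeight_pos hQ.1 hqpi.1 (a := -N) (b := n + N) (by omega))
  obtain ⟨x, ⟨hx₀, hxₙ⟩, hx, ⟨hppix, hPx⟩, -, hQx⟩ :=
    ((hN n).and_eventually (hcompare.and (hposP.and hposQ))).exists
  have hle := hx hx₀ hxₙ hPx hQx
  have hlower := le_of_pow_apply_le_mul hP.1 hQ (hcn _ _) (div_pos hPx hQx).le (hle 1)
  have hupper := h.factor.pathWeight_div_le_of_mem_controlledSet hμ hν hP.1 hQ.1 hqpi hn hx₀ hxₙ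
    hρ0 (hρ _ hppix) hδ0 (fun i j => hδ (i, j)) hQx
  have hQnn := Matrix.pow_apply_nonneg (powerMatrix_nonneg Q t) (n + 2 * N)
  exact ⟨_, _, _, _, (hle t).trans (mul_le_mul_of_nonneg_right
    (rpow_le_rpow_add_rpow hc0 hlower hupper t) (hQnn _ _))⟩

end Comparison

/-- **Schmidt.** If the mixing Markov shifts of `P` and `Q` are finitarily isomorphic with
finite expected code times, then `β_P(t) = β_Q(t)` for every `t ∈ ℝ`. -/
theorem beta_eq_of_fect
    {S₁ S₂ : Type*} [Fintype S₁] [DecidableEq S₁] [Fintype S₂] [DecidableEq S₂]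
    [MeasurableSpace S₁] [DiscreteMeasurableSpace S₁]
    [MeasurableSpace S₂] [DiscreteMeasurableSpace S₂]
    (P : Matrix S₁ S₁ ℝ) (hPstoch : IsStochastic P) (hPprim : IsPrimitive P)
    (ppi₁ : S₁ → ℝ) (hppi₁ : IsStationaryVector P ppi₁)
    (μ : Measure (ℤ → S₁)) (hμ : IsMarkovMeasure μ P ppi₁)
    (Q : Matrix S₂ S₂ ℝ) (hQstoch : IsStochastic Q) (hQprim : IsPrimitive Q)
    (ppi₂ : S₂ → ℝ) (hppi₂ : IsStationaryVector Q ppi₂)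
    (ν : Measure (ℤ → S₂)) (hν : IsMarkovMeasure ν Q ppi₂)
    (hfect : FinitarilyIsomorphicFect μ ν) :
    ∀ t : ℝ, betaFunction P t = betaFunction Q t := by
  obtain ⟨D, E, φ, ψ, hiso, hfin, hfin_inv⟩ := hfect
  have h := hiso.isShiftIsomorphism
  exact fun t => le_antisymm
    (h.betaFunction_le hPstoch hPprim hppi₁ hμ hQstoch hppi₂ hν hfin.ne t)
    (h.symm.betaFunction_le hQstoch hQprim hppi₂ hν hPstoch hppi₁ hμ hfin_inv.ne t)
end
end

section
/- Let P be an irreducible aperiodic stochastic matrix on a finite state set. Then Δ_P is a subgroup of Γ_P and the quotient group Γ_P/Δ_P is cyclic. -/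
open MeasureTheory ENNReal Filter

noncomputable section

/-!
Fix a state `i` and record each cycle through `i` of length `n` and weight `u` as the pair `(n, u)`.
Concatenating cycles multiplies these pairs, so their quotients form a subgroup `L` of `ℤ × ℝˣ`.
A pair in `L` whose length component vanishes comes from two cycles of equal length, so its weight
lies in `Δ_P`. Conjugating by paths to and from `i` shows that every cycle weight is a
weight component of an element of `L`, so `Γ_P` is the projection of `L` to `ℝˣ`. Hence `Γ_P / Δ_P`
is a quotient of the projection of `L` to `ℤ`, which is cyclic.
-/

theorem isCyclic_quotient_of_goursatSnd_le {A G : Type*} [Group A] [IsCyclic A] [Group G]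
    {L : Subgroup (A × G)} {H : Subgroup G} [H.Normal] (hL : L.goursatSnd ≤ H) :
    IsCyclic (L.map (MonoidHom.snd A G) ⧸ H.subgroupOf (L.map (MonoidHom.snd A G))) := by
  obtain ⟨⟨a, ha⟩, hgen⟩ := IsCyclic.exists_generator (α := L.map (MonoidHom.fst A G))
  obtain ⟨⟨a, g⟩, hag, rfl⟩ := ha
  refine ⟨((⟨g, (a, g), hag, rfl⟩ : L.map (MonoidHom.snd A G)) : _ ⧸ _), fun x => ?_⟩
  obtain ⟨⟨_, ⟨b, y⟩, hby, rfl⟩, rfl⟩ := QuotientGroup.mk_surjective x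
  obtain ⟨k, hk⟩ := hgen ⟨b, (b, y), hby, rfl⟩
  have hb : a ^ k = b := congrArg Subtype.val hk
  have hmem : (1, (g ^ k)⁻¹ * y) ∈ L := by
    simpa [hb] using mul_mem (inv_mem (zpow_mem hag k)) hby
  exact ⟨k, QuotientGroup.eq.2 (hL (Subgroup.mem_goursatSnd.2 hmem))⟩

section CycleWeight

variable {S : Type*} (P : Matrix S S ℝ)

theorem cycleWeight_add (n m : ℕ) (c : ℕ → S) :
    cycleWeight P (n + m) c = cycleWeight P n c * cycleWeight P m fun l => c (n + l) :=
  Finset.prod_range_add _ n m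

theorem cycleWeight_congr {n : ℕ} {c d : ℕ → S} (h : ∀ l ≤ n, c l = d l) :
    cycleWeight P n c = cycleWeight P n d :=
  Finset.prod_congr rfl fun l hl => by
    have hl : l < n := Finset.mem_range.1 hl
    rw [h l hl.le, h (l + 1) hl]

end CycleWeight

/-- `u` is the strictly positive weight of a path of length `n` from `i` to `j` in `P`. The weight
is a unit, as in `GammaGroup` and `DeltaGroup`, and the path is the initial segment of length `n`
of an infinite sequence, as in `cycleWeight`. -/
def IsPathWeight {S : Type*} (P : Matrix S S ℝ) (n : ℕ) (i j : S) (u : ℝˣ) : Prop :=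
  ∃ c : ℕ → S, c 0 = i ∧ c n = j ∧ 0 < cycleWeight P n c ∧ (u : ℝ) = cycleWeight P n c

namespace IsPathWeight

variable {S : Type*} {P : Matrix S S ℝ} {n m : ℕ} {i j k : S} {u v : ℝˣ}

theorem refl (i : S) : IsPathWeight P 0 i i 1 :=
  ⟨fun _ => i, rfl, rfl, by simp [cycleWeight], by simp [cycleWeight]⟩

theorem eq_one (h : IsPathWeight P 0 i j u) : u = 1 := by
  obtain ⟨c, -, -, -, hu⟩ := h
  exact Units.ext (by simpa [cycleWeight] using hu)

theorem single (h : 0 < P i j) : IsPathWeight P 1 i j (Units.mk0 (P i j) h.ne') :=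
  ⟨fun l => if l = 0 then i else j, by simp, by simp, by simpa [cycleWeight] using h,
    by simp [cycleWeight]⟩

theorem trans (hu : IsPathWeight P n i j u) (hv : IsPathWeight P m j k v) :
    IsPathWeight P (n + m) i k (u * v) := by
  obtain ⟨c, hc₀, hcn, hc, hcu⟩ := hu
  obtain ⟨d, hd₀, hdm, hd, hdv⟩ := hv
  let e : ℕ → S := fun l => if l ≤ n then c l else d (l - n)
  have hleft : ∀ l ≤ n, e l = c l := fun l hl => if_pos hl
  have hright : ∀ l, e (n + l) = d l := by
    rintro (_ | l)
    · simp [e, hcn, hd₀]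
    · simp [e]
  have he : cycleWeight P (n + m) e = cycleWeight P n c * cycleWeight P m d := by
    rw [cycleWeight_add, cycleWeight_congr P hleft, funext hright]
  exact ⟨e, (hleft 0 n.zero_le).trans hc₀, (hright m).trans hdm, he ▸ mul_pos hc hd,
    by rw [he, Units.val_mul, hcu, hdv]⟩

theorem mem_gammaGroup (h : IsPathWeight P n i i u) : u ∈ GammaGroup P := by
  rcases n.eq_zero_or_pos with rfl | hn
  · exact h.eq_one ▸ one_mem _
  · obtain ⟨c, hc₀, hcn, hc, hu⟩ := h
    exact Subgroup.subset_closure ⟨n, c, hn, hcn.trans hc₀.symm, hc, hu⟩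

theorem div_mem_deltaGroup (hu : IsPathWeight P n i i u) (hv : IsPathWeight P n i i v) :
    u / v ∈ DeltaGroup P := by
  rcases n.eq_zero_or_pos with rfl | hn
  · rw [hu.eq_one, hv.eq_one, div_one]
    exact one_mem _
  · obtain ⟨c, hc₀, hcn, hc, hcu⟩ := hu
    obtain ⟨d, hd₀, hdn, hd, hdv⟩ := hv
    exact Subgroup.subset_closure ⟨n, c, d, hn, hcn.trans hc₀.symm, hdn.trans hd₀.symm,
      hc₀.trans hd₀.symm, hc, hd, by rw [Units.val_div_eq_div_val, hcu, hdv]⟩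

end IsPathWeight

theorem exists_isPathWeight_of_pow_pos {S : Type*} [Fintype S] [DecidableEq S]
    {P : Matrix S S ℝ} (hP : ∀ i j, 0 ≤ P i j) {n : ℕ} {i j : S} (h : 0 < (P ^ n) i j) :
    ∃ u, IsPathWeight P n i j u := by
  let := P.toQuiver
  obtain ⟨⟨p, rfl⟩⟩ := (Matrix.pow_apply_pos_iff_nonempty_path hP n i j).1 h
  clear h
  induction p with
  | nil => exact ⟨1, .refl i⟩
  | cons p e ih =>
    obtain ⟨u, hu⟩ := ih
    exact ⟨_, hu.trans (.single e.down)⟩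

theorem deltaGroup_le_gammaGroup {S : Type*} (P : Matrix S S ℝ) :
    DeltaGroup P ≤ GammaGroup P := by
  refine (Subgroup.closure_le _).2 ?_
  rintro u ⟨n, c, d, -, hc, hd, -, hcpos, hdpos, hu⟩
  have hc' : IsPathWeight P n (c 0) (c 0) (Units.mk0 _ hcpos.ne') := ⟨c, rfl, hc, hcpos, rfl⟩
  have hd' : IsPathWeight P n (d 0) (d 0) (Units.mk0 _ hdpos.ne') := ⟨d, rfl, hd, hdpos, rfl⟩
  have hudiv : u = Units.mk0 _ hcpos.ne' / Units.mk0 _ hdpos.ne' :=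
    Units.ext (by simp [hu, Units.val_div_eq_div_val])
  exact hudiv ▸ div_mem hc'.mem_gammaGroup hd'.mem_gammaGroup

/-- The group generated by the pairs (length, weight) of the positive-weight cycles through `i`.
Cycles through `i` can be concatenated, so the quotients of two such pairs already form a group. -/
def cycleGroup {S : Type*} (P : Matrix S S ℝ) (i : S) : Subgroup (Multiplicative ℤ × ℝˣ) where
  carrier := {x | ∃ (n m : ℕ) (u v : ℝˣ), IsPathWeight P n i i u ∧ IsPathWeight P m i i v ∧
    x = (.ofAdd (n - m : ℤ), u / v)}
  one_mem' := ⟨0, 0, 1, 1, .refl i, .refl i, by simp [Prod.one_eq_mk]⟩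
  mul_mem' := by
    rintro _ _ ⟨n, m, u, v, hu, hv, rfl⟩ ⟨n', m', u', v', hu', hv', rfl⟩
    refine ⟨n + n', m + m', u * u', v * v', hu.trans hu', hv.trans hv', ?_⟩
    rw [Prod.mk_mul_mk, ← ofAdd_add, div_mul_div_comm, Nat.cast_add, Nat.cast_add,
      sub_add_sub_comm]
  inv_mem' := by
    rintro _ ⟨n, m, u, v, hu, hv, rfl⟩
    exact ⟨m, n, v, u, hv, hu, by rw [Prod.inv_mk, ← ofAdd_neg, neg_sub, inv_div]⟩

section CycleGroup

variable {S : Type*} {P : Matrix S S ℝ}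

theorem goursatSnd_cycleGroup_le_deltaGroup (i : S) :
    (cycleGroup P i).goursatSnd ≤ DeltaGroup P := by
  intro w hw
  obtain ⟨n, m, u, v, hu, hv, huv⟩ := Subgroup.mem_goursatSnd.1 hw
  obtain ⟨hnm, rfl⟩ := Prod.ext_iff.1 huv
  obtain rfl : n = m := by exact_mod_cast sub_eq_zero.1 (ofAdd_eq_one.1 hnm.symm)
  exact hu.div_mem_deltaGroup hv

theorem IsPathWeight.mem_cycleGroup {a b n : ℕ} {i j : S} {p q u : ℝˣ}
    (hp : IsPathWeight P a i j p) (hq : IsPathWeight P b j i q) (hu : IsPathWeight P n j j u) :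
    (.ofAdd (n : ℤ), u) ∈ cycleGroup P i := by
  refine ⟨a + n + b, a + b, p * u * q, p * q, (hp.trans hu).trans hq, hp.trans hq, ?_⟩
  have hlength : (n : ℤ) = (a + n + b : ℕ) - (a + b : ℕ) := by push_cast; ring
  have hweight : u = p * u * q / (p * q) := by
    rw [mul_right_comm, mul_div_cancel_left]
  rw [← hlength, ← hweight]

theorem map_snd_cycleGroup (hP : ∀ i j, ∃ n u, IsPathWeight P n i j u) (i : S) :
    (cycleGroup P i).map (MonoidHom.snd _ _) = GammaGroup P := by
  apply le_antisymm
  · rintro _ ⟨_, ⟨n, m, u, v, hu, hv, rfl⟩, rfl⟩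
    exact div_mem hu.mem_gammaGroup hv.mem_gammaGroup
  · refine (Subgroup.closure_le _).2 ?_
    rintro u ⟨n, c, -, hc, hpos, hu⟩
    obtain ⟨a, p, hp⟩ := hP i (c 0)
    obtain ⟨b, q, hq⟩ := hP (c 0) i
    exact ⟨_, hp.mem_cycleGroup hq ⟨c, rfl, hc, hpos, hu⟩, rfl⟩

end CycleGroup

theorem gammaGroup_eq_bot_of_isEmpty {S : Type*} [IsEmpty S] (P : Matrix S S ℝ) :
    GammaGroup P = ⊥ := by
  refine Subgroup.closure_eq_bot_iff.2 ?_
  rintro u ⟨_, c, -⟩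
  exact isEmptyElim (c 0)

theorem delta_le_gamma_and_quotient_cyclic_general {S : Type*} (P : Matrix S S ℝ)
    (hP : ∀ i j, ∃ n u, IsPathWeight P n i j u) :
    DeltaGroup P ≤ GammaGroup P ∧
    IsCyclic (GammaGroup P ⧸ (DeltaGroup P).subgroupOf (GammaGroup P)) := by
  refine ⟨deltaGroup_le_gammaGroup P, ?_⟩
  rcases isEmpty_or_nonempty S with _ | ⟨⟨i⟩⟩
  · rw [gammaGroup_eq_bot_of_isEmpty P]
    infer_instance
  · rw [← map_snd_cycleGroup hP i]
    exact isCyclic_quotient_of_goursatSnd_le (goursatSnd_cycleGroup_le_deltaGroup i)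

/-- **Parry–Schmidt.** For an irreducible aperiodic stochastic matrix `P`, the group
`Δ_P` is a subgroup of `Γ_P` and the quotient `Γ_P / Δ_P` is cyclic. -/
theorem delta_le_gamma_and_quotient_cyclic
    {S : Type*} [Fintype S] [DecidableEq S]
    (P : Matrix S S ℝ) (hPstoch : IsStochastic P) (hPprim : IsPrimitive P) :
    DeltaGroup (S := S) P ≤ GammaGroup P ∧
    IsCyclic ((GammaGroup P) ⧸ ((DeltaGroup (S := S) P).subgroupOf (GammaGroup P))) := by
  obtain ⟨n, hn⟩ := hPprim
  exact delta_le_gamma_and_quotient_cyclic_general P fun i j =>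
    ⟨n, exists_isPathWeight_of_pow_pos hPstoch.1 (hn i j)⟩
end
end
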